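/- Let s, t be real numbers with -1/2 < s, t ≤ 1/2. Let (p_k) and (q_k) be sequences of odd primes such that q_k/p_k² → 0 and p_k/q_k² → 0 as k → ∞. For each k, let X_k be any Legendre array of size p_k × q_k. Then 1/F((X_k)_{s,t}) converges, as k → ∞, to [7/6 + 8(|s| - 1/4)²]·[7/6 + 8(|t| - 1/4)²] - 1. -/

import Mathlib

open scoped BigOperators

noncomputable section

/-- `A` is an array of size `n × m`: entries vanish outside `[0,n) × [0,m)`. -/
def IsArray (n m : ℤ) (A : ℤ × ℤ → ℝ) : Prop :=
  ∀ i j : ℤ, A (i, j) ≠ 0 → 0 ≤ i ∧ i < n ∧ 0 ≤ j ∧ j < m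

/-- `A` is a binary array of size `n × m`. -/
def IsBinaryArray (n m : ℤ) (A : ℤ × ℤ → ℝ) : Prop :=
  IsArray n m A ∧
    ∀ i j : ℤ, 0 ≤ i → i < n → 0 ≤ j → j < m → A (i, j) = 1 ∨ A (i, j) = -1

/-- Aperiodic autocorrelation of a two-dimensional array at displacement `(u, v)`. -/
def autocorr (A : ℤ × ℤ → ℝ) (u v : ℤ) : ℝ :=
  ∑ᶠ i : ℤ, ∑ᶠ j : ℤ, A (i, j) * A (i + u, j + v)

/-- Merit factor of an array of size `n × m`. -/
def meritFactor (n m : ℤ) (A : ℤ × ℤ → ℝ) : ℝ :=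
  ((n : ℝ) * m) ^ 2 / ∑ᶠ uv ∈ {x : ℤ × ℤ | x ≠ (0, 0)}, (autocorr A uv.1 uv.2) ^ 2

/-- `a` is a sequence of length `n`: entries vanish outside `[0,n)`. -/
def IsSeq (n : ℤ) (a : ℤ → ℝ) : Prop := ∀ i : ℤ, a i ≠ 0 → 0 ≤ i ∧ i < n

/-- `a` is a binary sequence of length `n`. -/
def IsBinarySeq (n : ℤ) (a : ℤ → ℝ) : Prop :=
  IsSeq n a ∧ ∀ i : ℤ, 0 ≤ i → i < n → a i = 1 ∨ a i = -1

/-- Aperiodic autocorrelation of a sequence at displacement `u`. -/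
def seqAutocorr (a : ℤ → ℝ) (u : ℤ) : ℝ := ∑ᶠ i : ℤ, a i * a (i + u)

/-- Merit factor of a sequence of length `n`. -/
def seqMeritFactor (n : ℤ) (a : ℤ → ℝ) : ℝ :=
  (n : ℝ) ^ 2 / ∑ᶠ u ∈ {u : ℤ | u ≠ 0}, (seqAutocorr a u) ^ 2

/-- Rotation of a sequence of length `n` by a real number `s`. -/
def seqRotate (n : ℤ) (s : ℝ) (a : ℤ → ℝ) : ℤ → ℝ :=
  fun i => if 0 ≤ i ∧ i < n then a ((i + ⌊(n : ℝ) * s⌋) % n) else 0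

/-- Rotation of an array of size `n × m` by real numbers `s` and `t`. -/
def arrRotate (n m : ℤ) (s t : ℝ) (A : ℤ × ℤ → ℝ) : ℤ × ℤ → ℝ :=
  fun x => if 0 ≤ x.1 ∧ x.1 < n ∧ 0 ≤ x.2 ∧ x.2 < m then
    A ((x.1 + ⌊(n : ℝ) * s⌋) % n, (x.2 + ⌊(m : ℝ) * t⌋) % m) else 0

/-- Generating function of an array of size `n × m`, evaluated at `(x, y)`. -/
def genFun (n m : ℕ) (A : ℤ × ℤ → ℝ) (x y : ℂ) : ℂ :=
  ∑ i ∈ Finset.range n, ∑ j ∈ Finset.range m, (A (i, j) : ℂ) * x ^ i * y ^ j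

/-- `zeta d = e^{iπ/d}`, a primitive `(2d)`-th root of unity. -/
def zeta (d : ℕ) : ℂ := Complex.exp (Real.pi * Complex.I / d)

/-- `eps p j = e^{2πij/p}`, a `p`-th root of unity. -/
def eps (p : ℕ) (j : ℤ) : ℂ := Complex.exp (2 * Real.pi * Complex.I * j / p)

/-- The Legendre sequence of length `p` (for `p` an odd prime). -/
def legendreSeq (p : ℕ) : ℤ → ℝ :=
  fun i => if 0 ≤ i ∧ i < p then (if i = 0 then 1 else (jacobiSym i p : ℝ)) else 0

/-- The ternary Legendre sequence of length `p` (for `p` an odd prime). -/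
def ternaryLegendreSeq (p : ℕ) : ℤ → ℝ :=
  fun i => if 0 ≤ i ∧ i < p then (jacobiSym i p : ℝ) else 0

/-- `X` is a Legendre array of size `p × q`: a binary array whose entry at `(i,j)`
is the product of Legendre symbols `(i|p)(j|q)` for `1 ≤ i < p` and `1 ≤ j < q`. -/
def IsLegendreArray (p q : ℕ) (X : ℤ × ℤ → ℝ) : Prop :=
  IsBinaryArray p q X ∧
    ∀ i j : ℤ, 1 ≤ i → i < p → 1 ≤ j → j < q →
      X (i, j) = (jacobiSym i p : ℝ) * (jacobiSym j q : ℝ)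

/-
Let `E(A) = ∑_u C_A(u)²`, so that `1 / F(A) = E(A) / (n m)² - 1` for a binary array `A`. Since
`E(A)^{1/4}` is the `ℓ⁴` norm of the generating function of `A` on the torus, it is a seminorm.
Filling one row and one column of the zero-bordered array `(i|p)(j|q)` with signs adds an array of
energy at most `(p + q)³ = o((p q)²)`, so it does not affect the limit; and `E` is multiplicative
on products `a(i) b(j)`, which leaves the one-dimensional Legendre sequence.

For a sequence `a` of length `p`, `E(a)` is the mean of the sums of squared *periodic*
autocorrelations of `a` and of its twist `ζ^i a(i)`, where `ζ = e^{iπ/p}` satisfies `ζ^p = -1`. The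
first is elementary for the Legendre symbol `χ`. The second is a fourth moment of the discrete
Fourier transform, which for the twist of `χ` is a linear combination `∑_k y_k χ(j - k)` with
`∑ |y_k| = O(p log p)`. Pairs of equal indices in the fourth moment yield the main term, and the
remaining terms are complete sums of `χ` over products of four distinct linear factors. Instead of
Weil's bound, the estimate `O(p^{3/4})` suffices; it follows from averaging the fourth power of
`∑_x χ(x) χ(a x² + b x + c)` over all `(a, b, c)`, because this sum is invariant up to sign under
a group of `(p - 1)²` substitutions.
-/

section FourfoldCorrelation

open scoped ComplexConjugate

/-- The four indices split into two pairs of equal ones. -/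
abbrev Paired {κ : Type*} (a b c d : κ) : Prop :=
  (a = b ∧ c = d) ∨ (a = c ∧ b = d) ∨ (a = d ∧ b = c)

/-- The fourfold correlation of the columns `a`, `b`, `c`, `d` of the matrix `f`: it controls
the fourth moments of linear combinations of the columns. -/
def fourCorr {ι κ R : Type*} [Fintype ι] [CommSemiring R] (f : ι → κ → R) (a b c d : κ) : R :=
  ∑ i, f i a * f i b * f i c * f i d

variable {ι κ R : Type*} [Fintype ι]

section CommSemiring

variable [CommSemiring R] (f : ι → κ → R)

theorem fourCorr_swap_left (a b c d : κ) : fourCorr f a b c d = fourCorr f b a c d :=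
  Finset.sum_congr rfl fun _ _ => by ring

theorem fourCorr_swap_middle (a b c d : κ) : fourCorr f a b c d = fourCorr f a c b d :=
  Finset.sum_congr rfl fun _ _ => by ring

theorem fourCorr_swap_right (a b c d : κ) : fourCorr f a b c d = fourCorr f a b d c :=
  Finset.sum_congr rfl fun _ _ => by ring

variable {f} in
theorem fourCorr_of_not_paired_of_not_nodup {P : R → Prop}
    (hP : ∀ a c d, c ≠ d → P (fourCorr f a a c d)) {a b c d : κ} (hpair : ¬Paired a b c d)
    (hnodup : ¬[a, b, c, d].Nodup) : P (fourCorr f a b c d) := by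
  have hcoincide : a = b ∨ a = c ∨ a = d ∨ b = c ∨ b = d ∨ c = d := by
    simp only [List.nodup_cons, List.mem_cons, List.not_mem_nil] at hnodup
    tauto
  rcases hcoincide with rfl | rfl | rfl | rfl | rfl | rfl
  · exact hP _ _ _ (by tauto)
  · rw [fourCorr_swap_middle]
    exact hP _ _ _ (by tauto)
  · rw [fourCorr_swap_right, fourCorr_swap_middle]
    exact hP _ _ _ (by tauto)
  · rw [fourCorr_swap_left, fourCorr_swap_middle]
    exact hP _ _ _ (by tauto)
  · rw [fourCorr_swap_left, fourCorr_swap_right, fourCorr_swap_middle]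
    exact hP _ _ _ (by tauto)
  · rw [fourCorr_swap_middle, fourCorr_swap_left, fourCorr_swap_right, fourCorr_swap_middle]
    exact hP _ _ _ (by tauto)

theorem sum_mul_linearCombinations_eq_sum_fourCorr [Fintype κ] (α β γ δ : κ → R) :
    ∑ i, (∑ a, α a * f i a) * (∑ b, β b * f i b) * (∑ c, γ c * f i c) * (∑ d, δ d * f i d) =
      ∑ a, ∑ b, ∑ c, ∑ d, α a * β b * γ c * δ d * fourCorr f a b c d := by
  have expand : ∀ i, (∑ a, α a * f i a) * (∑ b, β b * f i b) * (∑ c, γ c * f i c) *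
      (∑ d, δ d * f i d) =
      ∑ a, ∑ b, ∑ c, ∑ d, α a * β b * γ c * δ d * (f i a * f i b * f i c * f i d) := by
    intro i
    simp_rw [mul_assoc, Finset.sum_mul, Finset.mul_sum]
    refine Finset.sum_congr rfl fun a _ => Finset.sum_congr rfl fun b _ =>
      Finset.sum_congr rfl fun c _ => Finset.sum_congr rfl fun d _ => by ring
  simp only [expand]
  simp only [fourCorr, Finset.mul_sum]
  rw [Finset.sum_comm]
  refine Finset.sum_congr rfl fun a _ => ?_
  rw [Finset.sum_comm]
  refine Finset.sum_congr rfl fun b _ => ?_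
  rw [Finset.sum_comm]
  exact Finset.sum_congr rfl fun c _ => Finset.sum_comm

end CommSemiring

section Counting

variable [Fintype κ] [DecidableEq κ]

theorem sum_ite_paired_le :
    ∑ a : κ, ∑ b : κ, ∑ c : κ, ∑ d : κ, (if Paired a b c d then (1 : ℤ) else 0) ≤
      3 * (Fintype.card κ : ℤ) ^ 2 := by
  calc _ ≤ ∑ a : κ, ∑ b : κ, ∑ c : κ, ∑ d : κ,
        ((if a = b then if c = d then (1 : ℤ) else 0 else 0) +
        (if a = c then if b = d then 1 else 0 else 0) +
        if a = d then if b = c then 1 else 0 else 0) := by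
        gcongr with a _ b _ c _ d _
        split_ifs <;> grind
    _ = 3 * (Fintype.card κ : ℤ) ^ 2 := by
        simp only [Finset.sum_add_distrib, Finset.sum_ite_irrel, Finset.sum_ite_eq, Finset.mem_univ,
          ↓reduceIte, Finset.sum_const_zero, Finset.sum_const, Finset.card_univ, Int.nsmul_eq_mul,
          mul_one]
        ring

theorem sum_ite_not_nodup_le :
    ∑ a : κ, ∑ b : κ, ∑ c : κ, ∑ d : κ, (if [a, b, c, d].Nodup then (0 : ℤ) else 1) ≤
      6 * (Fintype.card κ : ℤ) ^ 3 := by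
  let δ : κ → κ → ℤ := fun a b => if a = b then 1 else 0
  calc _ ≤ ∑ a : κ, ∑ b : κ, ∑ c : κ, ∑ d : κ,
        (δ a b + δ a c + δ a d + δ b c + δ b d + δ c d) := by
        gcongr with a _ b _ c _ d _
        simp only [δ]
        split_ifs <;> simp_all
    _ = 6 * (Fintype.card κ : ℤ) ^ 3 := by
        simp only [Finset.sum_add_distrib, Finset.sum_const, Finset.card_univ, Int.nsmul_eq_mul,
          Finset.sum_ite_eq, Finset.mem_univ, ↓reduceIte, mul_one, ← Finset.mul_sum, δ]
        ring

end Counting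

section Moment

variable [Fintype κ] [DecidableEq κ]

theorem sum_paired (y : κ → ℂ) :
    ∑ a, ∑ b, ∑ c, ∑ d, y a * conj (y b) * y c * conj (y d) *
      (if Paired a b c d then 1 else 0) =
    ((2 * (∑ k, ‖y k‖ ^ 2) ^ 2 + ‖∑ k, y k ^ 2‖ ^ 2 - 2 * ∑ k, ‖y k‖ ^ 4 : ℝ) : ℂ) := by
  let δ : κ → κ → ℂ := fun a b => if a = b then 1 else 0
  have inclusion_exclusion : ∀ a b c d : κ, (if Paired a b c d then (1 : ℂ) else 0) =
      δ a b * δ c d + δ a d * δ b c + δ a c * δ b d - 2 * (δ a b * δ b c * δ c d) := by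
    intro a b c d
    simp only [δ]
    split_ifs <;> first | (exfalso; grind) | norm_num
  have pair_ab : ∑ a, ∑ b, ∑ c, ∑ d, y a * conj (y b) * y c * conj (y d) * (δ a b * δ c d) =
      (∑ k, y k * conj (y k)) ^ 2 := by
    simp [δ, sq, Finset.sum_mul_sum, mul_assoc]
  have pair_ad : ∑ a, ∑ b, ∑ c, ∑ d, y a * conj (y b) * y c * conj (y d) * (δ a d * δ b c) =
      (∑ k, y k * conj (y k)) ^ 2 := by
    simp only [sq, Finset.sum_mul_sum]
    refine Finset.sum_congr rfl fun a _ => Finset.sum_congr rfl fun b _ => ?_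
    simp only [mul_ite, mul_one, mul_zero, Finset.sum_ite_irrel, Finset.sum_ite_eq,
      Finset.mem_univ, ↓reduceIte, Finset.sum_const_zero, δ]
    ring
  have pair_ac : ∑ a, ∑ b, ∑ c, ∑ d, y a * conj (y b) * y c * conj (y d) * (δ a c * δ b d) =
      (∑ k, y k ^ 2) * conj (∑ k, y k ^ 2) := by
    simp only [map_sum, Finset.sum_mul_sum]
    refine Finset.sum_congr rfl fun a _ => Finset.sum_congr rfl fun b _ => ?_
    simp only [mul_ite, mul_one, mul_zero, Finset.sum_ite_eq, Finset.mem_univ, ↓reduceIte,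
      map_pow, δ]
    ring
  have all_equal : ∑ a, ∑ b, ∑ c, ∑ d,
      y a * conj (y b) * y c * conj (y d) * (2 * (δ a b * δ b c * δ c d)) =
      2 * ∑ k, (y k * conj (y k)) ^ 2 := by
    simp only [Finset.mul_sum]
    refine Finset.sum_congr rfl fun a _ => ?_
    simp only [mul_ite, mul_one, mul_zero, Finset.sum_ite_eq, Finset.mem_univ, ↓reduceIte, δ]
    ring
  simp only [inclusion_exclusion, mul_sub, mul_add, Finset.sum_sub_distrib,
    Finset.sum_add_distrib, pair_ab, pair_ad, pair_ac, all_equal, Complex.mul_conj']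
  push_cast
  simp only [← pow_mul]
  ring

omit [DecidableEq κ] in
theorem sum_norm_linearCombination_pow_four (f : ι → κ → ℝ) (y : κ → ℂ) :
    ((∑ i, ‖∑ k, y k * f i k‖ ^ 4 : ℝ) : ℂ) =
      ∑ a, ∑ b, ∑ c, ∑ d, y a * conj (y b) * y c * conj (y d) * (fourCorr f a b c d : ℝ) := by
  have h := sum_mul_linearCombinations_eq_sum_fourCorr (fun i k => (f i k : ℂ)) y
    (fun k => conj (y k)) y (fun k => conj (y k))
  have hcast : ∀ a b c d, fourCorr (fun i k => (f i k : ℂ)) a b c d = (fourCorr f a b c d : ℝ) :=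
    fun a b c d => by simp [fourCorr]
  simp only [hcast] at h
  rw [← h]
  push_cast
  refine Finset.sum_congr rfl fun i _ => ?_
  have hconj : ∑ k, conj (y k) * (f i k : ℂ) = conj (∑ k, y k * (f i k : ℂ)) := by
    simp only [map_sum, map_mul, Complex.conj_ofReal]
  rw [hconj, mul_assoc, Complex.mul_conj']
  ring

theorem abs_sum_norm_linearCombination_pow_four_sub_le {f : ι → κ → ℝ} {M ε : ℝ}
    (hf : ∀ a b c d, |fourCorr f a b c d - if Paired a b c d then M else 0| ≤ ε) (y : κ → ℂ) :
    |∑ i, ‖∑ k, y k * f i k‖ ^ 4 -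
      M * (2 * (∑ k, ‖y k‖ ^ 2) ^ 2 + ‖∑ k, y k ^ 2‖ ^ 2 - 2 * ∑ k, ‖y k‖ ^ 4)| ≤
      ε * (∑ k, ‖y k‖) ^ 4 := by
  have hdiff : ((∑ i, ‖∑ k, y k * f i k‖ ^ 4 -
      M * (2 * (∑ k, ‖y k‖ ^ 2) ^ 2 + ‖∑ k, y k ^ 2‖ ^ 2 - 2 * ∑ k, ‖y k‖ ^ 4) : ℝ) : ℂ) =
      ∑ a, ∑ b, ∑ c, ∑ d, y a * conj (y b) * y c * conj (y d) *
        ((fourCorr f a b c d - if Paired a b c d then M else 0 : ℝ) : ℂ) := by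
    rw [Complex.ofReal_sub, sum_norm_linearCombination_pow_four, Complex.ofReal_mul, ← sum_paired]
    simp only [Complex.ofReal_sub, mul_sub, Finset.sum_sub_distrib, Finset.mul_sum]
    congr 1
    refine Finset.sum_congr rfl fun a _ => Finset.sum_congr rfl fun b _ =>
      Finset.sum_congr rfl fun c _ => Finset.sum_congr rfl fun d _ => ?_
    split_ifs <;> simp [mul_comm]
  have hpow : ε * (∑ k, ‖y k‖) ^ 4 =
      ∑ a, ∑ b, ∑ c, ∑ d, ‖y a‖ * ‖y b‖ * ‖y c‖ * ‖y d‖ * ε := by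
    simp only [← Finset.sum_mul, ← Finset.mul_sum]
    ring
  rw [← Real.norm_eq_abs, ← Complex.norm_real, hdiff, hpow]
  refine norm_sum_le_of_le _ fun a _ => norm_sum_le_of_le _ fun b _ =>
    norm_sum_le_of_le _ fun c _ => norm_sum_le_of_le _ fun d _ => ?_
  simp only [norm_mul, RCLike.norm_conj, Complex.norm_real, Real.norm_eq_abs]
  gcongr
  exact hf a b c d

end Moment

end FourfoldCorrelation

section QuadraticCharacterSums

variable {F : Type*} [Field F]

/-- The value at `x` of the quadratic polynomial with coefficient vector `v`, leading coefficient
first. -/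
def quadEval (v : F × F × F) (x : F) : F := v.1 * x ^ 2 + v.2.1 * x + v.2.2

theorem quadEval_injective {x y z : F} (hxy : x ≠ y) (hxz : x ≠ z) (hyz : y ≠ z) :
    Function.Injective fun v : F × F × F => (quadEval v x, quadEval v y, quadEval v z) := by
  rintro ⟨c, a, b⟩ ⟨c', a', b'⟩ h
  obtain ⟨hx, hy, hz⟩ : quadEval (c, a, b) x = quadEval (c', a', b') x ∧
      quadEval (c, a, b) y = quadEval (c', a', b') y ∧
      quadEval (c, a, b) z = quadEval (c', a', b') z := by simpa only [Prod.mk.injEq] using h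
  simp only [quadEval] at hx hy hz
  have hslope_xy : (c - c') * (x + y) + (a - a') = 0 :=
    mul_left_cancel₀ (sub_ne_zero.mpr hxy) (by linear_combination hx - hy)
  have hslope_xz : (c - c') * (x + z) + (a - a') = 0 :=
    mul_left_cancel₀ (sub_ne_zero.mpr hxz) (by linear_combination hx - hz)
  obtain rfl : c = c' :=
    mul_left_cancel₀ (sub_ne_zero.mpr hyz) (by linear_combination hslope_xy - hslope_xz)
  obtain rfl : a = a' := by linear_combination hslope_xy
  obtain rfl : b = b' := by linear_combination hx
  rfl

theorem quadEval_eq_lagrange_interpolation {x y z : F} (hxy : x ≠ y) (hxz : x ≠ z) (hyz : y ≠ z)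
    (v : F × F × F) (w : F) :
    quadEval v w = (y - w) * (z - w) / ((x - y) * (x - z)) * quadEval v x +
      -((x - w) * (z - w) / ((x - y) * (y - z))) * quadEval v y +
      (x - w) * (y - w) / ((x - z) * (y - z)) * quadEval v z := by
  have hxy' := sub_ne_zero.mpr hxy
  have hxz' := sub_ne_zero.mpr hxz
  have hyz' := sub_ne_zero.mpr hyz
  simp only [quadEval]
  field_simp
  ring

theorem sum_quadEval [Fintype F] {M : Type*} [AddCommMonoid M] {x y z : F} (hxy : x ≠ y)
    (hxz : x ≠ z) (hyz : y ≠ z) (g : F → F → F → M) :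
    ∑ v : F × F × F, g (quadEval v x) (quadEval v y) (quadEval v z) =
      ∑ a, ∑ b, ∑ c, g a b c := by
  have hbij := Finite.injective_iff_bijective.mp (quadEval_injective hxy hxz hyz)
  rw [hbij.sum_comp fun w : F × F × F => g w.1 w.2.1 w.2.2, Fintype.sum_prod_type]
  simp only [Fintype.sum_prod_type]

theorem exists_ne_and_ne_of_ringChar_ne_two [Finite F] (hF : ringChar F ≠ 2) (x w : F) :
    ∃ u, u ≠ x ∧ u ≠ w := by
  classical
  have := Fintype.ofFinite F
  have hcard : ({x, w} : Finset F).card < Fintype.card F := by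
    have h_odd := FiniteField.odd_card_of_char_ne_two hF
    have h_one := Fintype.one_lt_card (α := F)
    have h_two := Finset.card_le_two (a := x) (b := w)
    omega
  simpa using Finset.exists_mem_notMem_of_card_lt_card (hcard.trans_eq Finset.card_univ.symm)

variable [Fintype F] [DecidableEq F]

local notation "χ" => quadraticChar F

theorem abs_quadraticChar_le_one (a : F) : |χ a| ≤ 1 := by
  rcases quadraticChar_isQuadratic F a with h | h | h <;> simp [h]

theorem abs_mul_four_quadraticChar_le_one (a b c d : F) : |χ a * χ b * χ c * χ d| ≤ 1 := by
  simpa only [map_mul] using abs_quadraticChar_le_one (a * b * c * d)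

theorem sum_quadraticChar_mul_add (hF : ringChar F ≠ 2) (c : F) :
    ∑ x, χ x * χ (x + c) = (if c = 0 then (Fintype.card F : ℤ) else 0) - 1 := by
  split_ifs with hc
  · have hsq : ∀ x : F, χ x * χ (x + c) = 1 - if x = 0 then 1 else 0 := by
      intro x
      rcases eq_or_ne x 0 with rfl | hx
      · simp
      · rw [hc, add_zero, ← sq, quadraticChar_sq_one hx, if_neg hx, sub_zero]
    simp only [hsq, Finset.sum_sub_distrib, Finset.sum_ite_eq', Finset.mem_univ, if_true]
    simp
  · have hJ := jacobiSum_nontrivial_inv (quadraticChar_ne_one hF)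
    rw [(quadraticChar_isQuadratic F).inv, jacobiSum] at hJ
    have hsubst : ∀ x : F, χ (-c * x) * χ (-c * x + c) = χ (-1) * (χ x * χ (1 - x)) := by
      intro x
      rw [show -c * x + c = c * (1 - x) by ring, show -c * x = -1 * (c * x) by ring]
      simp only [map_mul]
      linear_combination (χ (-1) * χ x * χ (1 - x)) * quadraticChar_sq_one hc
    rw [← Equiv.sum_comp (Equiv.mulLeft₀ (-c) (neg_ne_zero.mpr hc))]
    simp only [Equiv.mulLeft₀_apply, hsubst, ← Finset.mul_sum, hJ]
    linear_combination -quadraticChar_sq_one (neg_ne_zero.mpr (one_ne_zero (α := F)))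

theorem sum_quadraticChar_plane (hF : ringChar F ≠ 2) :
    ∑ a, ∑ b, ∑ c, χ a * χ b * χ c * χ (a + b + c) =
      χ (-1) * (Fintype.card F * (Fintype.card F - 1)) := by
  have hinner : ∀ a b : F, ∑ c, χ a * χ b * χ c * χ (a + b + c) =
      Fintype.card F * (if b = -a then χ a * χ b else 0) - χ a * χ b := by
    intro a b
    calc _ = χ a * χ b * ∑ c, χ c * χ (c + (a + b)) := by
          rw [Finset.mul_sum]
          refine Finset.sum_congr rfl fun c _ => ?_
          rw [add_comm c]
          ring
      _ = _ := by
          simp only [sum_quadraticChar_mul_add hF, add_comm a b, add_eq_zero_iff_eq_neg]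
          split_ifs <;> ring
  have hneg : ∀ a : F, χ a * χ (-a) = χ (-1) * (1 - if a = 0 then 1 else 0) := by
    intro a
    rcases eq_or_ne a 0 with rfl | ha
    · simp
    · rw [neg_eq_neg_one_mul, map_mul, if_neg ha]
      linear_combination χ (-1) * quadraticChar_sq_one ha
  simp only [hinner, Finset.sum_sub_distrib, ← Finset.mul_sum, quadraticChar_sum_zero hF,
    Finset.sum_ite_eq', Finset.mem_univ, if_true, hneg]
  simp only [Finset.sum_const, Finset.card_univ, Int.nsmul_eq_mul, mul_one, mul_zero,
    sub_zero]
  ring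

theorem sum_quadraticChar_scaled_plane (hF : ringChar F ≠ 2) {α β γ : F} (hα : α ≠ 0)
    (hβ : β ≠ 0) (hγ : γ ≠ 0) :
    ∑ a, ∑ b, ∑ c, χ a * χ b * χ c * χ (α * a + β * b + γ * c) =
      χ (α * β * γ) * χ (-1) * (Fintype.card F * (Fintype.card F - 1)) := by
  rw [mul_assoc, ← sum_quadraticChar_plane hF, Finset.mul_sum, eq_comm,
    ← Equiv.sum_comp (Equiv.mulLeft₀ α hα)]
  refine Finset.sum_congr rfl fun a _ => ?_
  rw [Finset.mul_sum, ← Equiv.sum_comp (Equiv.mulLeft₀ β hβ)]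
  refine Finset.sum_congr rfl fun b _ => ?_
  rw [Finset.mul_sum, ← Equiv.sum_comp (Equiv.mulLeft₀ γ hγ)]
  refine Finset.sum_congr rfl fun c _ => ?_
  have hsq : χ (α * β * γ) ^ 2 = 1 :=
    quadraticChar_sq_one (mul_ne_zero (mul_ne_zero hα hβ) hγ)
  simp only [Equiv.mulLeft₀_apply, map_mul] at hsq ⊢
  linear_combination (χ a * χ b * χ c * χ (α * a + β * b + γ * c)) * hsq

section QuadraticFamily

theorem abs_fourCorr_quadEval_le (x y z w : F) :
    |fourCorr (fun v x => χ (quadEval v x)) x y z w| ≤ (Fintype.card F : ℤ) ^ 3 := by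
  calc _ ≤ ∑ _v : F × F × F, (1 : ℤ) := Finset.abs_sum_le_sum_abs _ _ |>.trans
        (Finset.sum_le_sum fun _ _ => abs_mul_four_quadraticChar_le_one _ _ _ _)
    _ = (Fintype.card F : ℤ) ^ 3 := by
        simp only [Finset.sum_const, Finset.card_univ, Fintype.card_prod, Int.nsmul_eq_mul,
          Nat.cast_mul, mul_one]
        ring

/-- Reparametrise quadratics by their values at `x`, `y`, `w`; the value at the isolated point
`w` then occurs in a single factor, whose sum vanishes. -/
theorem fourCorr_quadEval_eq_zero (hF : ringChar F ≠ 2) {x y w : F} (hxw : x ≠ w) (hyw : y ≠ w) :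
    fourCorr (fun v x => χ (quadEval v x)) x x y w = 0 := by
  have sum_mul_char : ∀ u, x ≠ u → u ≠ w → ∀ g : F → F → ℤ,
      ∑ v : F × F × F, g (quadEval v x) (quadEval v u) * χ (quadEval v w) = 0 := by
    intro u hxu huw g
    rw [sum_quadEval hxu hxw huw (fun a b c => g a b * χ c)]
    simp only [← Finset.mul_sum, quadraticChar_sum_zero hF, mul_zero, Finset.sum_const_zero]
  rcases eq_or_ne x y with rfl | hxy
  · obtain ⟨u, hux, huw⟩ := exists_ne_and_ne_of_ringChar_ne_two hF x w
    exact sum_mul_char u hux.symm huw fun a _ => χ a * χ a * χ a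
  · exact sum_mul_char y hxy hyw fun a b => χ a * χ a * χ b

theorem fourCorr_quadEval_eq_zero_of_pair (hF : ringChar F ≠ 2) {a c d : F} (hcd : c ≠ d) :
    fourCorr (fun v x => χ (quadEval v x)) a a c d = 0 := by
  rcases eq_or_ne a d with rfl | had
  · rw [fourCorr_swap_right]
    exact fourCorr_quadEval_eq_zero hF hcd.symm hcd.symm
  · exact fourCorr_quadEval_eq_zero hF had hcd

theorem fourCorr_quadEval_of_nodup (hF : ringChar F ≠ 2) {x y z w : F}
    (h : [x, y, z, w].Nodup) :
    fourCorr (fun v x => χ (quadEval v x)) x y z w = Fintype.card F * (Fintype.card F - 1) := by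
  obtain ⟨hxy, hxz, hxw, hyz, hyw, hzw⟩ : x ≠ y ∧ x ≠ z ∧ x ≠ w ∧ y ≠ z ∧ y ≠ w ∧ z ≠ w := by
    simpa [and_assoc] using h
  simp only [← sub_ne_zero (b := w)] at hxw hyw hzw
  have hxy' := sub_ne_zero.mpr hxy
  have hxz' := sub_ne_zero.mpr hxz
  have hyz' := sub_ne_zero.mpr hyz
  have hprod : (y - w) * (z - w) / ((x - y) * (x - z)) *
      -((x - w) * (z - w) / ((x - y) * (y - z))) * ((x - w) * (y - w) / ((x - z) * (y - z))) =
      -1 * ((x - w) * (y - w) * (z - w) / ((x - y) * (x - z) * (y - z))) ^ 2 := by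
    field_simp
  simp only [fourCorr, quadEval_eq_lagrange_interpolation hxy hxz hyz _ w]
  rw [sum_quadEval hxy hxz hyz (fun a b c => χ a * χ b * χ c *
    χ ((y - w) * (z - w) / ((x - y) * (x - z)) * a +
      -((x - w) * (z - w) / ((x - y) * (y - z))) * b +
      (x - w) * (y - w) / ((x - z) * (y - z)) * c)),
    sum_quadraticChar_scaled_plane hF (by positivity) (neg_ne_zero.mpr (by positivity))
      (by positivity), hprod, map_mul, quadraticChar_sq_one' (by positivity), mul_one, ← sq,
    quadraticChar_sq_one (neg_ne_zero.mpr one_ne_zero), one_mul]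

theorem abs_fourCorr_quadEval_sub_le (hF : ringChar F ≠ 2) (x y z w : F) :
    |fourCorr (fun v x => χ (quadEval v x)) x y z w - Fintype.card F * (Fintype.card F - 1)| ≤
      (Fintype.card F : ℤ) ^ 3 * (if Paired x y z w then 1 else 0) +
      (Fintype.card F : ℤ) ^ 2 * (if [x, y, z, w].Nodup then 0 else 1) := by
  have hn : 1 ≤ (Fintype.card F : ℤ) := by exact_mod_cast Fintype.card_pos (α := F)
  set n : ℤ := (Fintype.card F : ℤ)
  by_cases hd : [x, y, z, w].Nodup
  · rw [fourCorr_quadEval_of_nodup hF hd, sub_self, abs_zero]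
    positivity
  by_cases hp : Paired x y z w
  · have h := abs_le.mp (abs_fourCorr_quadEval_le x y z w)
    rw [if_pos hp, if_neg hd, abs_le]
    constructor <;> nlinarith
  · have hzero : fourCorr (fun v x => χ (quadEval v x)) x y z w = 0 :=
      fourCorr_of_not_paired_of_not_nodup (P := (· = 0))
        (fun _ _ _ => fourCorr_quadEval_eq_zero_of_pair hF) hp hd
    rw [if_neg hp, if_neg hd, hzero, abs_le]
    constructor <;> nlinarith

end QuadraticFamily

section CubicSum

/-- The quadratic character sum of the cubic `x * quadEval v x`, which vanishes at zero. -/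
def cubicSum (v : F × F × F) : ℤ := ∑ x, χ x * χ (quadEval v x)

theorem sum_cubicSum_pow_four :
    ∑ v : F × F × F, cubicSum v ^ 4 = ∑ x, ∑ y, ∑ z, ∑ w,
      χ x * χ y * χ z * χ w * fourCorr (fun v x => χ (quadEval v x)) x y z w := by
  rw [← sum_mul_linearCombinations_eq_sum_fourCorr]
  exact Finset.sum_congr rfl fun v _ => by rw [cubicSum]; ring

theorem sum_cubicSum_pow_four_le (hF : ringChar F ≠ 2) :
    ∑ v : F × F × F, cubicSum v ^ 4 ≤ 9 * (Fintype.card F : ℤ) ^ 5 := by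
  set n : ℤ := (Fintype.card F : ℤ)
  have hmean : ∀ N : ℤ, ∑ x, ∑ y, ∑ z, ∑ w, χ x * χ y * χ z * χ w * N = 0 := fun N => by
    simp only [← Finset.mul_sum, ← Finset.sum_mul, quadraticChar_sum_zero hF, mul_zero, zero_mul,
      Finset.sum_const_zero]
  calc ∑ v : F × F × F, cubicSum v ^ 4
      = ∑ x, ∑ y, ∑ z, ∑ w, χ x * χ y * χ z * χ w *
          (fourCorr (fun v x => χ (quadEval v x)) x y z w - n * (n - 1)) := by
        generalize n * (n - 1) = N
        simp only [mul_sub, Finset.sum_sub_distrib, hmean, sum_cubicSum_pow_four, sub_zero]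
    _ ≤ ∑ x : F, ∑ y : F, ∑ z : F, ∑ w : F, (n ^ 3 * (if Paired x y z w then 1 else 0) +
          n ^ 2 * (if [x, y, z, w].Nodup then 0 else 1)) := by
        gcongr with x _ y _ z _ w _
        refine (le_abs_self _).trans ?_
        rw [abs_mul]
        exact (mul_le_of_le_one_left (abs_nonneg _)
          (abs_mul_four_quadraticChar_le_one x y z w)).trans
            (abs_fourCorr_quadEval_sub_le hF x y z w)
    _ ≤ n ^ 3 * (3 * n ^ 2) + n ^ 2 * (6 * n ^ 3) := by
        simp only [Finset.sum_add_distrib, ← Finset.mul_sum]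
        gcongr
        · exact sum_ite_paired_le
        · exact sum_ite_not_nodup_le
    _ = 9 * n ^ 5 := by ring

theorem cubicSum_scale {μ t : F} (ht : t ≠ 0) (v : F × F × F) :
    cubicSum (μ * t ^ 2 * v.1, μ * t * v.2.1, μ * v.2.2) = χ μ * χ t * cubicSum v := by
  unfold cubicSum
  rw [← Equiv.sum_comp (Equiv.mulLeft₀ t ht) (fun x => χ x * χ (quadEval v x)), Finset.mul_sum]
  refine Finset.sum_congr rfl fun x _ => ?_
  have hval : quadEval (μ * t ^ 2 * v.1, μ * t * v.2.1, μ * v.2.2) x =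
      μ * quadEval v (t * x) := by
    simp only [quadEval]
    ring
  simp only [Equiv.mulLeft₀_apply, hval, map_mul]
  linear_combination (-χ μ * χ x * χ (quadEval v (t * x))) * quadraticChar_sq_one ht

/-- The quadratics obtained from `v` by rescaling the variable and the value; on them `cubicSum`
is constant up to sign. -/
def scalingOrbit (v : F × F × F) : Finset (F × F × F) :=
  Finset.univ.image fun u : Fˣ × Fˣ => (u.1 * u.2 ^ 2 * v.1, u.1 * u.2 * v.2.1, u.1 * v.2.2)

theorem cubicSum_pow_four_of_mem_scalingOrbit {v w : F × F × F} (hw : w ∈ scalingOrbit v) :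
    cubicSum w ^ 4 = cubicSum v ^ 4 := by
  obtain ⟨⟨μ, t⟩, -, rfl⟩ := Finset.mem_image.mp hw
  have hμ := quadraticChar_sq_one μ.ne_zero
  have ht := quadraticChar_sq_one t.ne_zero
  rw [cubicSum_scale t.ne_zero]
  linear_combination (cubicSum v ^ 4 * χ t ^ 4 * (χ μ ^ 2 + 1)) * hμ +
    (cubicSum v ^ 4 * (χ t ^ 2 + 1)) * ht

theorem sq_card_sub_one_le_two_mul_card_scalingOrbit {v : F × F × F} (hv₁ : v.1 ≠ 0)
    (hv₂ : v.2.2 ≠ 0) : (Fintype.card F - 1) ^ 2 ≤ 2 * (scalingOrbit v).card := by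
  have hcard := Finset.card_le_mul_card_image Finset.univ 2 (f := fun u : Fˣ × Fˣ =>
    ((u.1 * u.2 ^ 2 * v.1, u.1 * u.2 * v.2.1, u.1 * v.2.2) : F × F × F)) (by
    intro w hw
    obtain ⟨⟨μ, t⟩, -, rfl⟩ := Finset.mem_image.mp hw
    refine (Finset.card_le_card (t := {(μ, t), (μ, -t)}) ?_).trans Finset.card_le_two
    rintro ⟨μ', t'⟩ h
    simp only [Finset.mem_filter, Finset.mem_univ, true_and, Prod.mk.injEq] at h
    obtain ⟨hlead, -, hconst⟩ := h
    obtain rfl : μ' = μ := Units.ext (mul_right_cancel₀ hv₂ hconst)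
    have hsq : (t' : F) ^ 2 = (t : F) ^ 2 :=
      mul_left_cancel₀ μ'.ne_zero (mul_right_cancel₀ hv₁ hlead)
    rcases sq_eq_sq_iff_eq_or_eq_neg.mp hsq with h | h
    · simp [Units.ext h]
    · simp [show t' = -t from Units.ext (by simpa using h)])
  rwa [Finset.card_univ, Fintype.card_prod, Fintype.card_units, ← sq] at hcard

theorem cubicSum_pow_four_le (hF : ringChar F ≠ 2) {v : F × F × F} (hv₁ : v.1 ≠ 0)
    (hv₂ : v.2.2 ≠ 0) : cubicSum v ^ 4 ≤ 81 * (Fintype.card F : ℤ) ^ 3 := by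
  have horbit : ((scalingOrbit v).card : ℤ) * cubicSum v ^ 4 ≤ 9 * (Fintype.card F : ℤ) ^ 5 := by
    calc _ = ∑ w ∈ scalingOrbit v, cubicSum w ^ 4 := by
          rw [Finset.sum_congr rfl fun w => cubicSum_pow_four_of_mem_scalingOrbit,
            Finset.sum_const, nsmul_eq_mul]
      _ ≤ ∑ w, cubicSum w ^ 4 := Finset.sum_le_univ_sum_of_nonneg fun w => by positivity
      _ ≤ _ := sum_cubicSum_pow_four_le hF
  have hcard := sq_card_sub_one_le_two_mul_card_scalingOrbit hv₁ hv₂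
  obtain ⟨m, hm⟩ : ∃ m, Fintype.card F = m + 1 := Nat.exists_eq_add_one.mpr Fintype.card_pos
  have hm2 : 2 ≤ m := by
    have h_odd := FiniteField.odd_card_of_char_ne_two hF
    have h_one := Fintype.one_lt_card (α := F)
    omega
  rw [hm, Nat.add_sub_cancel] at hcard
  rw [hm] at horbit ⊢
  push_cast at horbit ⊢
  have hcard' : (m : ℤ) ^ 2 ≤ 2 * (scalingOrbit v).card := by exact_mod_cast hcard
  have hratio : (2 * ((m : ℤ) + 1)) ^ 2 ≤ 9 * m ^ 2 := by nlinarith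
  refine le_of_mul_le_mul_left (a := (2 * ((m : ℤ) + 1)) ^ 2) ?_ (by positivity)
  calc (2 * ((m : ℤ) + 1)) ^ 2 * cubicSum v ^ 4
      ≤ 9 * (2 * ((scalingOrbit v).card : ℤ)) * cubicSum v ^ 4 := by gcongr; linarith [hcard']
    _ ≤ 9 * (2 * (9 * ((m : ℤ) + 1) ^ 5)) := by linarith
    _ ≤ (2 * ((m : ℤ) + 1)) ^ 2 * (81 * (m + 1) ^ 3) := by
        have : (0 : ℤ) ≤ (m + 1) ^ 5 := by positivity
        nlinarith

theorem abs_cubicSum_le (hF : ringChar F ≠ 2) {v : F × F × F} (hv₁ : v.1 ≠ 0)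
    (hv₂ : v.2.2 ≠ 0) : (|cubicSum v| : ℝ) ≤ 3 * (Fintype.card F : ℝ) ^ (3 / 4 : ℝ) := by
  refine (pow_le_pow_iff_left₀ (abs_nonneg _) (by positivity) four_ne_zero).mp ?_
  rw [Even.pow_abs (by decide), mul_pow, ← Real.rpow_mul_natCast (by positivity)]
  norm_num
  exact_mod_cast cubicSum_pow_four_le hF hv₁ hv₂

end CubicSum

section ShiftedCharacters

/-- The substitution `j = d + 1 / x` turns the four factors into three linear forms in `x`; the
extra `1` is the term at `x = 0`. -/
theorem fourCorr_quadraticChar_sub_add_one (a b c d : F) :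
    fourCorr (fun j a => χ (j - a)) a b c d + 1 =
      ∑ x, χ (1 + (d - a) * x) * χ (1 + (d - b) * x) * χ (1 + (d - c) * x) := by
  rw [fourCorr, ← Equiv.sum_comp ((Equiv.inv F).trans (Equiv.addLeft d)),
    ← Finset.sum_ite_eq' Finset.univ (0 : F) (fun _ => (1 : ℤ)) |>.trans
      (if_pos (Finset.mem_univ _)),
    ← Finset.sum_add_distrib]
  refine Finset.sum_congr rfl fun x _ => ?_
  simp only [Equiv.trans_apply, Equiv.inv_apply, Equiv.coe_addLeft]
  rcases eq_or_ne x 0 with rfl | hx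
  · simp
  · have hfactor : ∀ u, d + x⁻¹ - u = x⁻¹ * (1 + (d - u) * x) := fun u => by
      field_simp
      ring
    simp only [hfactor, sub_self, zero_mul, add_zero, map_mul, map_one, if_neg hx]
    linear_combination (χ (1 + (d - a) * x) * χ (1 + (d - b) * x) * χ (1 + (d - c) * x)) *
      (χ x⁻¹ ^ 2 + 1) * quadraticChar_sq_one (inv_ne_zero hx)

theorem sum_quadraticChar_one_add_mul {A : F} (hA : A ≠ 0) (B C : F) :
    ∑ x, χ (1 + A * x) * χ (1 + B * x) * χ (1 + C * x) =
      cubicSum (B / A * (C / A), B / A * (1 - C / A) + C / A * (1 - B / A),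
        (1 - B / A) * (1 - C / A)) := by
  rw [cubicSum, ← Equiv.sum_comp ((Equiv.subRight (1 : F)).trans (Equiv.mulLeft₀ A⁻¹
    (inv_ne_zero hA)))]
  refine Finset.sum_congr rfl fun x _ => ?_
  simp only [Equiv.trans_apply, Equiv.subRight_apply, Equiv.mulLeft₀_apply, mul_assoc, ← map_mul]
  congr 2
  · field_simp
    ring
  · simp only [quadEval]
    field_simp
    ring

theorem abs_fourCorr_quadraticChar_sub_le_of_nodup (hF : ringChar F ≠ 2) {a b c d : F}
    (h : [a, b, c, d].Nodup) :
    |((fourCorr (fun j a => χ (j - a)) a b c d : ℤ) : ℝ)| ≤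
      3 * (Fintype.card F : ℝ) ^ (3 / 4 : ℝ) + 1 := by
  obtain ⟨hab, hac, had, -, hbd, hcd⟩ : a ≠ b ∧ a ≠ c ∧ a ≠ d ∧ b ≠ c ∧ b ≠ d ∧ c ≠ d := by
    simpa [and_assoc] using h
  have hda : d - a ≠ 0 := sub_ne_zero.mpr had.symm
  have hratio : ∀ u, u ≠ a → 1 - (d - u) / (d - a) ≠ 0 := fun u hu =>
    sub_ne_zero.mpr fun h => hu (by linear_combination -(div_eq_one_iff_eq hda).mp h.symm)
  have hsum := fourCorr_quadraticChar_sub_add_one a b c d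
  rw [sum_quadraticChar_one_add_mul hda, ← eq_sub_iff_add_eq] at hsum
  rw [hsum, Int.cast_sub, Int.cast_one]
  refine (abs_sub _ _).trans ?_
  rw [abs_one]
  gcongr
  exact abs_cubicSum_le hF
    (mul_ne_zero (div_ne_zero (sub_ne_zero.mpr hbd.symm) hda)
      (div_ne_zero (sub_ne_zero.mpr hcd.symm) hda))
    (mul_ne_zero (hratio b hab.symm) (hratio c hac.symm))

theorem sum_quadraticChar_sub_mul_sub (hF : ringChar F ≠ 2) {c d : F} (hcd : c ≠ d) :
    ∑ j, χ (j - c) * χ (j - d) = -1 := by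
  rw [← Equiv.sum_comp (Equiv.addRight c)]
  simpa [hcd, sub_eq_zero, add_sub_assoc, -quadraticChar_apply] using
    sum_quadraticChar_mul_add hF (c - d)

theorem abs_fourCorr_quadraticChar_sub_le_of_pair (hF : ringChar F ≠ 2) {a c d : F}
    (hcd : c ≠ d) : |fourCorr (fun j a => χ (j - a)) a a c d| ≤ 2 := by
  have hterm : ∀ j, χ (j - a) * χ (j - a) * χ (j - c) * χ (j - d) =
      χ (j - c) * χ (j - d) - if j = a then χ (a - c) * χ (a - d) else 0 := by
    intro j
    split_ifs with h
    · simp [h]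
    · linear_combination (χ (j - c) * χ (j - d)) * quadraticChar_sq_one (sub_ne_zero.mpr h)
  have hle := abs_le.mp (abs_quadraticChar_le_one ((a - c) * (a - d)))
  rw [map_mul] at hle
  simp only [fourCorr, hterm, Finset.sum_sub_distrib, sum_quadraticChar_sub_mul_sub hF hcd,
    Finset.sum_ite_eq', Finset.mem_univ, if_true]
  rw [abs_le]
  constructor <;> linarith

theorem abs_fourCorr_quadraticChar_sub_sub_card_le (a c : F) :
    |fourCorr (fun j a => χ (j - a)) a a c c - Fintype.card F| ≤ 2 := by
  have hterm : ∀ j, |χ (j - a) * χ (j - a) * χ (j - c) * χ (j - c) - 1| ≤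
      (if j = a then 1 else 0) + if j = c then 1 else 0 := by
    intro j
    by_cases ha : j = a
    · simp only [ha, sub_self, MulChar.map_zero]
      split_ifs <;> simp
    by_cases hc : j = c
    · simp only [hc, sub_self, MulChar.map_zero]
      split_ifs <;> simp
    have hone : χ (j - a) * χ (j - a) * χ (j - c) * χ (j - c) = 1 := by
      linear_combination χ (j - c) ^ 2 * quadraticChar_sq_one (sub_ne_zero.mpr ha) +
        quadraticChar_sq_one (sub_ne_zero.mpr hc)
    rw [hone]
    simp [ha, hc]
  have hcard : fourCorr (fun j a => χ (j - a)) a a c c - Fintype.card F =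
      ∑ j, (χ (j - a) * χ (j - a) * χ (j - c) * χ (j - c) - 1) := by
    simp only [fourCorr, Finset.sum_sub_distrib]
    simp only [Finset.sum_const, Finset.card_univ, Int.nsmul_eq_mul, mul_one]
  rw [hcard]
  refine (Finset.abs_sum_le_sum_abs _ _).trans ((Finset.sum_le_sum fun j _ => hterm j).trans ?_)
  simp [Finset.sum_add_distrib]

theorem abs_fourCorr_quadraticChar_sub_sub_card_le_of_paired {a b c d : F}
    (h : Paired a b c d) :
    |fourCorr (fun j a => χ (j - a)) a b c d - Fintype.card F| ≤ 2 := by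
  rcases h with ⟨rfl, rfl⟩ | ⟨rfl, rfl⟩ | ⟨rfl, rfl⟩
  · exact abs_fourCorr_quadraticChar_sub_sub_card_le _ _
  · rw [fourCorr_swap_middle]
    exact abs_fourCorr_quadraticChar_sub_sub_card_le _ _
  · rw [fourCorr_swap_right, fourCorr_swap_middle]
    exact abs_fourCorr_quadraticChar_sub_sub_card_le _ _

theorem abs_fourCorr_quadraticChar_sub_le (hF : ringChar F ≠ 2) (a b c d : F) :
    |fourCorr (fun j a => (χ (j - a) : ℝ)) a b c d -
      if Paired a b c d then (Fintype.card F : ℝ) else 0| ≤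
      3 * (Fintype.card F : ℝ) ^ (3 / 4 : ℝ) + 2 := by
  have hpow : 0 ≤ 3 * (Fintype.card F : ℝ) ^ (3 / 4 : ℝ) := by positivity
  have hcast : fourCorr (fun j a => (χ (j - a) : ℝ)) a b c d =
      (fourCorr (fun j a => χ (j - a)) a b c d : ℤ) := by
    simp only [fourCorr]
    push_cast
    rfl
  rw [hcast]
  by_cases hp : Paired a b c d
  · have h : |((fourCorr (fun j a => χ (j - a)) a b c d : ℤ) : ℝ) - Fintype.card F| ≤ 2 := by
      exact_mod_cast abs_fourCorr_quadraticChar_sub_sub_card_le_of_paired hp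
    rw [if_pos hp]
    linarith
  rw [if_neg hp, sub_zero]
  by_cases hd : [a, b, c, d].Nodup
  · linarith [abs_fourCorr_quadraticChar_sub_le_of_nodup hF hd]
  · have h : |fourCorr (fun j a => χ (j - a)) a b c d| ≤ 2 :=
      fourCorr_of_not_paired_of_not_nodup (P := (|·| ≤ 2))
        (fun _ _ _ => abs_fourCorr_quadraticChar_sub_le_of_pair hF) hp hd
    have h' : |((fourCorr (fun j a => χ (j - a)) a b c d : ℤ) : ℝ)| ≤ 2 := by exact_mod_cast h
    linarith

end ShiftedCharacters

end QuadraticCharacterSums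

section PeriodicCorrelation

open scoped ComplexConjugate

/-- The periodic autocorrelation of a complex function on a finite abelian group. -/
def perCorr {G : Type*} [AddCommGroup G] [Fintype G] (A : G → ℂ) (u : G) : ℂ :=
  ∑ m, A (m + u) * conj (A m)

theorem perCorr_comp_add_right {G : Type*} [AddCommGroup G] [Fintype G] (A : G → ℂ) (r u : G) :
    perCorr (fun m => A (m + r)) u = perCorr A u := by
  simp only [perCorr]
  rw [← Equiv.sum_comp (Equiv.addRight r) fun m => A (m + u) * conj (A m)]
  simp only [Equiv.coe_addRight, add_right_comm]

/-- The Fourier transform of a function on a finite commutative ring with respect to the additive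
character `ψ`, without normalisation. -/
def charTransform {R : Type*} [CommRing R] [Fintype R] (ψ : AddChar R ℂ) (A : R → ℂ) (j : R) : ℂ :=
  ∑ m, A m * ψ (m * j)

section CommRing

variable {R : Type*} [CommRing R] [Fintype R] {ψ : AddChar R ℂ}

theorem charTransform_neg (ψ : AddChar R ℂ) (A : R → ℂ) (j : R) :
    charTransform ψ A (-j) = charTransform ψ (fun m => A (-m)) j := by
  simp only [charTransform]
  rw [← Equiv.sum_comp (Equiv.neg R)]
  simp only [Equiv.neg_apply, neg_mul_neg]

theorem charTransform_comp_add_right (ψ : AddChar R ℂ) (A : R → ℂ) (r j : R) :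
    charTransform ψ (fun m => A (m + r)) j = ψ (-(r * j)) * charTransform ψ A j := by
  simp only [charTransform, Finset.mul_sum]
  rw [← Equiv.sum_comp (Equiv.addRight r) fun m => ψ (-(r * j)) * (A m * ψ (m * j))]
  refine Finset.sum_congr rfl fun m _ => ?_
  rw [Equiv.coe_addRight, mul_left_comm, ← AddChar.map_add_eq_mul]
  congr 2
  ring

theorem norm_charTransform_comp_add_right (ψ : AddChar R ℂ) (A : R → ℂ) (r j : R) :
    ‖charTransform ψ (fun m => A (m + r)) j‖ = ‖charTransform ψ A j‖ := by
  rw [charTransform_comp_add_right, norm_mul, AddChar.norm_apply, one_mul]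

theorem charTransform_charTransform (hψ : ψ.IsPrimitive) (A : R → ℂ) (m : R) :
    charTransform ψ (charTransform ψ A) m = Fintype.card R * A (-m) := by
  classical
  calc charTransform ψ (charTransform ψ A) m
      = ∑ l, A l * ∑ k, ψ (k * (l + m)) := by
        simp only [charTransform, Finset.sum_mul, Finset.mul_sum]
        rw [Finset.sum_comm]
        refine Finset.sum_congr rfl fun l _ => Finset.sum_congr rfl fun k _ => ?_
        rw [mul_add, mul_comm l, AddChar.map_add_eq_mul, mul_assoc]
    _ = Fintype.card R * A (-m) := by
        simp only [AddChar.sum_mulShift _ hψ, add_eq_zero_iff_eq_neg]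
        simp [mul_comm]

theorem sum_charTransform_mul_charTransform_sub (hψ : ψ.IsPrimitive) (A B : R → ℂ)
    (j : R) :
    ∑ k, charTransform ψ A k * charTransform ψ B (j - k) =
      Fintype.card R * charTransform ψ (fun m => A m * B m) j := by
  calc ∑ k, charTransform ψ A k * charTransform ψ B (j - k)
      = ∑ m, B m * ψ (m * j) * charTransform ψ (charTransform ψ A) (-m) := by
        simp only [charTransform, Finset.sum_mul, Finset.mul_sum]
        rw [Finset.sum_comm]
        refine Finset.sum_congr rfl fun m _ => Finset.sum_congr rfl fun k _ => ?_
        rw [mul_sub, sub_eq_add_neg, AddChar.map_add_eq_mul]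
        refine Finset.sum_congr rfl fun l _ => ?_
        rw [mul_neg, mul_comm k m]
        ring
    _ = Fintype.card R * charTransform ψ (fun m => A m * B m) j := by
        simp only [charTransform_charTransform hψ, neg_neg]
        rw [charTransform, Finset.mul_sum]
        exact Finset.sum_congr rfl fun m _ => by ring

theorem sum_charTransform_sq (hψ : ψ.IsPrimitive) (A : R → ℂ) :
    ∑ k, charTransform ψ A k ^ 2 = Fintype.card R * ∑ m, A m * A (-m) := by
  have h := sum_charTransform_mul_charTransform_sub hψ A (fun m => A (-m)) 0
  simp only [zero_sub, charTransform_neg, neg_neg, ← sq] at h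
  rw [h]
  simp only [charTransform, mul_zero, AddChar.map_zero_eq_one, mul_one]

theorem charTransform_conj (ψ : AddChar R ℂ) (A : R → ℂ) (j : R) :
    charTransform ψ (fun m => conj (A (-m))) j = conj (charTransform ψ A j) := by
  simp only [charTransform, map_sum, map_mul]
  rw [← Equiv.sum_comp (Equiv.neg R)]
  refine Finset.sum_congr rfl fun m _ => ?_
  rw [Equiv.neg_apply, neg_neg, neg_mul, AddChar.map_neg_eq_conj]

theorem sum_norm_charTransform_sq (hψ : ψ.IsPrimitive) (A : R → ℂ) :
    ∑ j, ‖charTransform ψ A j‖ ^ 2 = Fintype.card R * ∑ m, ‖A m‖ ^ 2 := by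
  have h := sum_charTransform_mul_charTransform_sub hψ A (fun m => conj (A m)) 0
  simp only [zero_sub, charTransform_neg, charTransform_conj, Complex.mul_conj'] at h
  simp only [charTransform, mul_zero, AddChar.map_zero_eq_one, mul_one] at h
  exact_mod_cast h

theorem charTransform_perCorr (ψ : AddChar R ℂ) (A : R → ℂ) (j : R) :
    charTransform ψ (perCorr A) j = (‖charTransform ψ A j‖ ^ 2 : ℝ) := by
  calc charTransform ψ (perCorr A) j
      = ∑ m, conj (A m) * charTransform ψ (fun u => A (u + m)) j := by
        simp only [charTransform, perCorr, Finset.sum_mul, Finset.mul_sum]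
        rw [Finset.sum_comm]
        refine Finset.sum_congr rfl fun m _ => Finset.sum_congr rfl fun u _ => ?_
        rw [add_comm u m]
        ring
    _ = conj (charTransform ψ A j) * charTransform ψ A j := by
        simp only [charTransform_comp_add_right, AddChar.map_neg_eq_conj, ← mul_assoc,
          ← Finset.sum_mul]
        simp only [charTransform, map_sum, map_mul]
    _ = (‖charTransform ψ A j‖ ^ 2 : ℝ) := by
        rw [Complex.conj_mul', Complex.ofReal_pow]

theorem sum_norm_charTransform_pow_four (hψ : ψ.IsPrimitive) (A : R → ℂ) :
    ∑ j, ‖charTransform ψ A j‖ ^ 4 = Fintype.card R * ∑ u, ‖perCorr A u‖ ^ 2 := by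
  rw [← sum_norm_charTransform_sq hψ]
  refine Finset.sum_congr rfl fun j _ => ?_
  rw [charTransform_perCorr, Complex.norm_real, Real.norm_of_nonneg (by positivity), ← pow_mul]

end CommRing

section MultiplicativeCharacter

variable {F : Type*} [Field F] [Fintype F] {ψ : AddChar F ℂ} {χ : MulChar F ℂ}

theorem charTransform_mulChar (hχ : χ ≠ 1) (ψ : AddChar F ℂ) (a : F) :
    charTransform ψ χ a = χ⁻¹ a * gaussSum χ ψ := by
  have h : charTransform ψ χ a = gaussSum χ (ψ.mulShift a) := by
    simp only [charTransform, gaussSum, AddChar.mulShift_apply, mul_comm a]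
  rcases eq_or_ne a 0 with rfl | ha
  · rw [h, AddChar.mulShift_zero, gaussSum_one_right hχ, MulChar.map_zero, zero_mul]
  · rw [h]
    exact gaussSum_mulShift_eq χ ψ (Units.mk0 a ha)

theorem norm_gaussSum_sq (hχ : χ ≠ 1) (hψ : ψ.IsPrimitive) :
    ‖gaussSum χ ψ‖ ^ 2 = Fintype.card F := by
  have h := gaussSum_mul_gaussSum_eq_card hχ hψ
  rw [← star_gaussSum_eq] at h
  have h' : ((‖gaussSum χ ψ‖ ^ 2 : ℝ) : ℂ) = Fintype.card F := by
    rw [← h, Complex.star_def, Complex.mul_conj']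
    push_cast
    rfl
  exact_mod_cast h'

theorem sum_norm_perCorr_mul_mulChar_sq (hχ : χ ≠ 1) (hψ : ψ.IsPrimitive)
    (d : F → ℂ) :
    (Fintype.card F : ℝ) ^ 3 * ∑ u, ‖perCorr (fun m => d m * χ m) u‖ ^ 2 =
      ∑ j, ‖∑ k, charTransform ψ d k * χ⁻¹ (j - k)‖ ^ 4 := by
  have hn : (Fintype.card F : ℝ) ^ 2 ≠ 0 := by positivity
  have hG : ‖gaussSum χ ψ‖ ^ 4 = (Fintype.card F : ℝ) ^ 2 := by
    rw [← norm_gaussSum_sq hχ hψ]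
    ring
  have htransform : ∀ j, (Fintype.card F : ℂ) * charTransform ψ (fun m => d m * χ m) j =
      (∑ k, charTransform ψ d k * χ⁻¹ (j - k)) * gaussSum χ ψ := fun j => by
    rw [← sum_charTransform_mul_charTransform_sub hψ, Finset.sum_mul]
    simp only [charTransform_mulChar hχ, mul_assoc]
  have hsum : (Fintype.card F : ℝ) ^ 4 * ∑ j, ‖charTransform ψ (fun m => d m * χ m) j‖ ^ 4 =
      (∑ j, ‖∑ k, charTransform ψ d k * χ⁻¹ (j - k)‖ ^ 4) * (Fintype.card F : ℝ) ^ 2 := by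
    rw [← hG, Finset.mul_sum, Finset.sum_mul]
    refine Finset.sum_congr rfl fun j _ => ?_
    rw [← mul_pow, ← mul_pow, ← norm_mul, ← htransform, norm_mul, Complex.norm_natCast]
  rw [sum_norm_charTransform_pow_four hψ] at hsum
  refine mul_right_cancel₀ hn ?_
  rw [← hsum]
  ring

theorem abs_sum_norm_perCorr_mul_quadraticChar_sq_sub_le [DecidableEq F] (hF : ringChar F ≠ 2)
    (hψ : ψ.IsPrimitive) {d : F → ℂ} (hd : ∀ m, ‖d m‖ = 1) :
    |∑ u, ‖perCorr (fun m => d m * (quadraticChar F m : ℂ)) u‖ ^ 2 -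
      (2 * (Fintype.card F : ℝ) ^ 2 + ‖∑ m, d m * d (-m)‖ ^ 2 -
        2 / (Fintype.card F : ℝ) * ∑ u, ‖perCorr d u‖ ^ 2)| ≤
      (3 * (Fintype.card F : ℝ) ^ (3 / 4 : ℝ) + 2) *
        (∑ k, ‖charTransform ψ d k‖) ^ 4 / (Fintype.card F : ℝ) ^ 3 := by
  set χ : MulChar F ℂ := (quadraticChar F).ringHomComp (Int.castRingHom ℂ) with hχ_def
  have hχ : χ ≠ 1 := by
    rw [hχ_def, Ne, MulChar.ringHomComp_eq_one_iff Int.cast_injective]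
    exact quadraticChar_ne_one hF
  have hinv : χ⁻¹ = χ := ((quadraticChar_isQuadratic F).comp _).inv
  have hχa : ∀ a, χ a = ((quadraticChar F a : ℝ) : ℂ) := fun a => (Complex.ofReal_intCast _).symm
  have hn : (Fintype.card F : ℝ) ≠ 0 := by positivity
  have h := abs_sum_norm_linearCombination_pow_four_sub_le
    (abs_fourCorr_quadraticChar_sub_le hF) (charTransform ψ d)
  simp only [← hχa] at h
  have hcorr := sum_norm_perCorr_mul_mulChar_sq hχ hψ d
  rw [hinv] at hcorr
  rw [← hcorr, sum_norm_charTransform_sq hψ, sum_norm_charTransform_pow_four hψ,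
    sum_charTransform_sq hψ, norm_mul, Complex.norm_natCast] at h
  simp only [hd, one_pow, Finset.sum_const, Finset.card_univ, nsmul_eq_mul, mul_one] at h
  rw [le_div_iff₀ (by positivity)]
  refine le_trans (le_of_eq ?_) h
  have hcast : ∀ m, ((quadraticChar F m : ℤ) : ℂ) = χ m := fun m => rfl
  simp only [hcast]
  conv_lhs => rw [← abs_of_nonneg (by positivity : 0 ≤ (Fintype.card F : ℝ) ^ 3), ← abs_mul]
  congr 1
  field_simp

end MultiplicativeCharacter

end PeriodicCorrelation

section CorrelationEnergy

open scoped Pointwise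

/-- The aperiodic cross-correlation of two functions, the first of which is supported in `S`. -/
def crossCorr {G : Type*} [AddCommGroup G] (S : Finset G) (A B : G → ℝ) (u : G) : ℝ :=
  ∑ x ∈ S, A x * B (x + u)

/-- The sum of the squared aperiodic autocorrelations of a function supported in `S`, the trivial
displacement included; autocorrelations at displacements outside `S - S` vanish. -/
def corrEnergy {G : Type*} [AddCommGroup G] [DecidableEq G] (S : Finset G) (A : G → ℝ) : ℝ :=
  ∑ u ∈ S - S, crossCorr S A A u ^ 2

/-- The fourth root of the correlation energy, i.e. the `ℓ⁴` norm of the generating function. It is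
a seminorm on the functions supported in `S`. -/
def corrNorm {G : Type*} [AddCommGroup G] [DecidableEq G] (S : Finset G) (A : G → ℝ) : ℝ :=
  √√(corrEnergy S A)

variable {G : Type*} [AddCommGroup G] {S : Finset G} {A B : G → ℝ}

theorem crossCorr_add_add (S : Finset G) (A B : G → ℝ) (u : G) :
    crossCorr S (A + B) (A + B) u =
      (crossCorr S A A u + crossCorr S A B u) + (crossCorr S B A u + crossCorr S B B u) := by
  simp only [crossCorr, Pi.add_apply, ← Finset.sum_add_distrib]
  exact Finset.sum_congr rfl fun x _ => by ring

theorem abs_crossCorr_self_le {D : G → ℝ} (hD : ∀ x, |D x| ≤ 1) (S : Finset G) (u : G) :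
    |crossCorr S D D u| ≤ ∑ x ∈ S, |D (x + u)| := by
  refine Finset.abs_sum_le_sum_abs _ _ |>.trans (Finset.sum_le_sum fun x _ => ?_)
  rw [abs_mul]
  exact mul_le_of_le_one_left (abs_nonneg _) (hD x)

variable [DecidableEq G]

theorem corrEnergy_nonneg (S : Finset G) (A : G → ℝ) : 0 ≤ corrEnergy S A :=
  Finset.sum_nonneg fun _ _ => sq_nonneg _

theorem corrEnergy_neg (S : Finset G) (A : G → ℝ) : corrEnergy S (-A) = corrEnergy S A := by
  simp only [corrEnergy, crossCorr, Pi.neg_apply, neg_mul_neg]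

theorem crossCorr_eq_zero (hB : ∀ x ∉ S, B x = 0) {u : G} (hu : u ∉ S - S) :
    crossCorr S A B u = 0 := by
  refine Finset.sum_eq_zero fun x hx => ?_
  have hxu : x + u ∉ S := fun h => hu (by simpa using Finset.sub_mem_sub h hx)
  rw [hB _ hxu, mul_zero]

theorem corrEnergy_eq_sum (hA : ∀ x ∉ S, A x = 0) {T : Finset G} (hT : S - S ⊆ T) :
    corrEnergy S A = ∑ u ∈ T, crossCorr S A A u ^ 2 :=
  Finset.sum_subset hT fun u _ hu => by rw [crossCorr_eq_zero hA hu, zero_pow two_ne_zero]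

theorem corrEnergy_mul {H : Type*} [AddCommGroup H] [DecidableEq H] (S : Finset G) (T : Finset H)
    (a : G → ℝ) (b : H → ℝ) :
    corrEnergy (S ×ˢ T) (fun x => a x.1 * b x.2) = corrEnergy S a * corrEnergy T b := by
  have hsub : S ×ˢ T - S ×ˢ T = (S - S) ×ˢ (T - T) := by
    simp only [← Finset.coe_inj, Finset.coe_sub, Finset.coe_product, Set.prod_sub_prod_comm]
  have hcorr : ∀ u, crossCorr (S ×ˢ T) (fun x => a x.1 * b x.2) (fun x => a x.1 * b x.2) u =
      crossCorr S a a u.1 * crossCorr T b b u.2 := fun u => by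
    simp only [crossCorr, Finset.sum_product, Finset.sum_mul_sum, Prod.fst_add, Prod.snd_add,
      mul_mul_mul_comm]
  simp only [corrEnergy, hsub, hcorr, Finset.sum_product, Finset.sum_mul_sum, mul_pow]

theorem sum_sub_comp_add_left {M : Type*} [AddCommMonoid M] {f : G → M} (hf : ∀ x ∉ S, f x = 0)
    {x : G} (hx : x ∈ S) : ∑ u ∈ S - S, f (x + u) = ∑ z ∈ S, f z := by
  symm
  refine Finset.sum_of_injOn (· - x) sub_left_injective.injOn ?_ ?_ ?_
  · intro z hz
    exact Finset.sub_mem_sub hz hx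
  · intro u _ hu
    exact hf _ fun h => hu ⟨x + u, h, add_sub_cancel_left x u⟩
  · intro z _
    rw [add_sub_cancel]

theorem sum_crossCorr_sq (hA : ∀ x ∉ S, A x = 0) (hB : ∀ x ∉ S, B x = 0) :
    ∑ u ∈ S - S, crossCorr S A B u ^ 2 = ∑ u ∈ S - S, crossCorr S A A u * crossCorr S B B u := by
  calc ∑ u ∈ S - S, crossCorr S A B u ^ 2
      = ∑ x ∈ S, ∑ y ∈ S, A x * A y * ∑ u ∈ S - S, B (x + u) * B (x + u + (y - x)) := by
        simp only [crossCorr, sq, Finset.sum_mul_sum]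
        rw [Finset.sum_comm]
        refine Finset.sum_congr rfl fun x _ => ?_
        rw [Finset.sum_comm]
        refine Finset.sum_congr rfl fun y _ => ?_
        rw [Finset.mul_sum]
        refine Finset.sum_congr rfl fun u _ => ?_
        rw [add_right_comm, add_sub_cancel, mul_mul_mul_comm]
    _ = ∑ x ∈ S, A x * ∑ y ∈ S, A y * crossCorr S B B (y - x) := by
        refine Finset.sum_congr rfl fun x hx => ?_
        rw [Finset.mul_sum]
        refine Finset.sum_congr rfl fun y _ => ?_
        rw [sum_sub_comp_add_left (f := fun z => B z * B (z + (y - x)))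
          (fun z hz => by rw [hB z hz, zero_mul]) hx, crossCorr, mul_assoc]
    _ = ∑ x ∈ S, A x * ∑ u ∈ S - S, A (x + u) * crossCorr S B B u := by
        refine Finset.sum_congr rfl fun x hx => ?_
        rw [← sum_sub_comp_add_left (f := fun y => A y * crossCorr S B B (y - x))
          (fun z hz => by rw [hA z hz, zero_mul]) hx]
        simp only [add_sub_cancel_left]
    _ = ∑ u ∈ S - S, crossCorr S A A u * crossCorr S B B u := by
        simp only [Finset.mul_sum, ← mul_assoc]
        rw [Finset.sum_comm]
        simp only [← Finset.sum_mul, crossCorr]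

theorem sqrt_sum_crossCorr_sq_le (hA : ∀ x ∉ S, A x = 0) (hB : ∀ x ∉ S, B x = 0) :
    √(∑ u ∈ S - S, crossCorr S A B u ^ 2) ≤ corrNorm S A * corrNorm S B := by
  rw [sum_crossCorr_sq hA hB, corrNorm, corrNorm, ← Real.sqrt_mul (Real.sqrt_nonneg _)]
  exact Real.sqrt_le_sqrt (Real.sum_mul_le_sqrt_mul_sqrt _ _ _)

theorem sqrt_sum_add_sq_le {ι : Type*} (T : Finset ι) (f g : ι → ℝ) :
    √(∑ u ∈ T, (f u + g u) ^ 2) ≤ √(∑ u ∈ T, f u ^ 2) + √(∑ u ∈ T, g u ^ 2) := by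
  have h := Real.Lp_add_le T f g one_le_two
  simpa only [Real.rpow_two, sq_abs, ← Real.sqrt_eq_rpow] using h

theorem corrNorm_sq (S : Finset G) (A : G → ℝ) : corrNorm S A ^ 2 = √(corrEnergy S A) :=
  Real.sq_sqrt (Real.sqrt_nonneg _)

theorem corrNorm_add_le (hA : ∀ x ∉ S, A x = 0) (hB : ∀ x ∉ S, B x = 0) :
    corrNorm S (A + B) ≤ corrNorm S A + corrNorm S B := by
  refine Real.sqrt_le_iff.mpr ⟨add_nonneg (Real.sqrt_nonneg _) (Real.sqrt_nonneg _), ?_⟩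
  calc √(corrEnergy S (A + B))
      ≤ √(∑ u ∈ S - S, (crossCorr S A A u + crossCorr S A B u) ^ 2) +
          √(∑ u ∈ S - S, (crossCorr S B A u + crossCorr S B B u) ^ 2) := by
        simp only [corrEnergy, crossCorr_add_add]
        exact sqrt_sum_add_sq_le _ _ _
    _ ≤ (√(corrEnergy S A) + √(∑ u ∈ S - S, crossCorr S A B u ^ 2)) +
          (√(∑ u ∈ S - S, crossCorr S B A u ^ 2) + √(corrEnergy S B)) :=
        add_le_add (sqrt_sum_add_sq_le _ _ _) (sqrt_sum_add_sq_le _ _ _)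
    _ ≤ (corrNorm S A ^ 2 + corrNorm S A * corrNorm S B) +
          (corrNorm S B * corrNorm S A + corrNorm S B ^ 2) := by
        rw [corrNorm_sq, corrNorm_sq]
        gcongr
        · exact sqrt_sum_crossCorr_sq_le hA hB
        · exact sqrt_sum_crossCorr_sq_le hB hA
    _ = (corrNorm S A + corrNorm S B) ^ 2 := by ring

theorem abs_corrNorm_sub_le (hA : ∀ x ∉ S, A x = 0) (hB : ∀ x ∉ S, B x = 0) :
    |corrNorm S A - corrNorm S B| ≤ corrNorm S (A - B) := by
  have hAB : ∀ x ∉ S, (A - B) x = 0 := fun x hx => by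
    rw [Pi.sub_apply, hA x hx, hB x hx, sub_zero]
  have hBA : ∀ x ∉ S, (B - A) x = 0 := fun x hx => by
    rw [Pi.sub_apply, hA x hx, hB x hx, sub_zero]
  have h₁ := corrNorm_add_le hB hAB
  have h₂ := corrNorm_add_le hA hBA
  have hswap : corrNorm S (B - A) = corrNorm S (A - B) := by
    rw [corrNorm, ← neg_sub, corrEnergy_neg, corrNorm]
  rw [add_sub_cancel] at h₁ h₂
  rw [abs_sub_le_iff]
  constructor <;> linarith

theorem corrEnergy_le_card_pow_three {D : G → ℝ} (hD₀ : ∀ x ∉ S, D x = 0) (hD : ∀ x, |D x| ≤ 1) :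
    corrEnergy S D ≤ (S.card : ℝ) ^ 3 := by
  have hcard : ∀ f : G → G, ∑ x ∈ S, |D (f x)| ≤ S.card := fun f =>
    (Finset.sum_le_sum fun x _ => hD (f x)).trans_eq (by simp)
  calc corrEnergy S D = ∑ u ∈ S - S, |crossCorr S D D u| * |crossCorr S D D u| :=
        Finset.sum_congr rfl fun u _ => by rw [abs_mul_abs_self, sq]
    _ ≤ ∑ u ∈ S - S, (S.card : ℝ) * ∑ x ∈ S, |D (x + u)| := by
        gcongr with u
        · exact (abs_crossCorr_self_le hD S u).trans (hcard _)
        · exact abs_crossCorr_self_le hD S u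
    _ = (S.card : ℝ) * ∑ x ∈ S, ∑ u ∈ S - S, |D (x + u)| := by
        rw [← Finset.mul_sum, Finset.sum_comm]
    _ = (S.card : ℝ) * ∑ _x ∈ S, ∑ z ∈ S, |D z| := by
        congr 1
        exact Finset.sum_congr rfl fun x hx => sum_sub_comp_add_left (f := fun z => |D z|)
          (fun z hz => by rw [hD₀ z hz, abs_zero]) hx
    _ ≤ (S.card : ℝ) * ∑ _x ∈ S, (S.card : ℝ) := by
        gcongr
        exact hcard id
    _ = (S.card : ℝ) ^ 3 := by
        rw [Finset.sum_const, nsmul_eq_mul]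
        ring

theorem corrEnergy_eq_of_subset {S S' : Finset G} (hS : S' ⊆ S) (hA : ∀ x ∉ S', A x = 0) :
    corrEnergy S A = corrEnergy S' A := by
  have hcorr : ∀ u, crossCorr S A A u = crossCorr S' A A u := fun u =>
    (Finset.sum_subset hS fun x _ hx => by rw [hA x hx, zero_mul]).symm
  rw [corrEnergy_eq_sum hA (Finset.sub_subset_sub hS hS)]
  simp only [corrEnergy, hcorr]

theorem tendsto_corrEnergy_div_of_tendsto_sub {ι : Type*} {l : Filter ι} {S : ι → Finset G}
    {A B : ι → G → ℝ} {N : ι → ℝ} {L : ℝ} (hA : ∀ i, ∀ x ∉ S i, A i x = 0)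
    (hB : ∀ i, ∀ x ∉ S i, B i x = 0) (hN : ∀ i, 0 ≤ N i)
    (hlim : Filter.Tendsto (fun i => corrEnergy (S i) (A i) / N i) l (nhds L))
    (hsub : Filter.Tendsto (fun i => corrEnergy (S i) (B i - A i) / N i) l (nhds 0)) :
    Filter.Tendsto (fun i => corrEnergy (S i) (B i) / N i) l (nhds L) := by
  have hroot : ∀ x : ℝ, 0 ≤ x → √√x ^ 4 = x := fun x hx => by
    rw [show 4 = 2 * 2 from rfl, pow_mul, Real.sq_sqrt (Real.sqrt_nonneg _), Real.sq_sqrt hx]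
  have hdiv : ∀ i C, √√(corrEnergy (S i) C / N i) = corrNorm (S i) C / √√(N i) := fun i C => by
    rw [Real.sqrt_div (corrEnergy_nonneg _ _), Real.sqrt_div (Real.sqrt_nonneg _), corrNorm]
  have hnonneg : ∀ i C, 0 ≤ corrEnergy (S i) C / N i := fun i C =>
    div_nonneg (corrEnergy_nonneg _ _) (hN i)
  have hdist : Filter.Tendsto (fun i => dist √√(corrEnergy (S i) (A i) / N i)
      √√(corrEnergy (S i) (B i) / N i)) l (nhds 0) := by
    refine squeeze_zero (fun _ => dist_nonneg) (fun i => ?_)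
      (by simpa only [Real.sqrt_zero] using hsub.sqrt.sqrt)
    rw [dist_comm, Real.dist_eq, hdiv, hdiv, hdiv, ← sub_div, abs_div,
      abs_of_nonneg (Real.sqrt_nonneg (√(N i)))]
    gcongr
    exact abs_corrNorm_sub_le (hB i) (hA i)
  rcases l.eq_or_neBot with rfl | _
  · exact Filter.tendsto_bot
  have h := ((tendsto_iff_of_dist hdist).mp hlim.sqrt.sqrt).pow 4
  rw [hroot L (ge_of_tendsto' hlim fun i => hnonneg i (A i))] at h
  simpa only [hroot _ (hnonneg _ _)] using h

end CorrelationEnergy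

section Twist

open scoped ComplexConjugate Pointwise

variable {n : ℕ}

/-- The function on `ZMod n` interpolating the powers `1, w, …, w ^ (n - 1)`. When `w ^ n = -1` it
is a "half character": multiplying by it turns the periodic autocorrelations of a sequence into its
negaperiodic ones. -/
def twist (w : ℂ) (m : ZMod n) : ℂ :=
  w ^ m.val

theorem norm_twist {w : ℂ} (hw : ‖w‖ = 1) (m : ZMod n) : ‖twist w m‖ = 1 := by
  rw [twist, norm_pow, hw, one_pow]

theorem conj_twist_mul_twist {w : ℂ} (hw : ‖w‖ = 1) (m : ZMod n) :
    conj (twist w m) * twist w m = 1 := by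
  rw [Complex.conj_mul', norm_twist hw]
  norm_num

variable [NeZero n]

theorem sum_zmod_val {M : Type*} [AddCommMonoid M] (f : ℕ → M) :
    ∑ m : ZMod n, f m.val = ∑ i ∈ Finset.range n, f i := by
  refine Finset.sum_nbij' ZMod.val (fun i => (i : ZMod n)) (fun m _ => ?_) (fun _ _ => ?_)
    (fun m _ => ?_) (fun i hi => ?_) (fun _ _ => rfl)
  · exact Finset.mem_range.mpr m.val_lt
  · exact Finset.mem_univ _
  · exact ZMod.natCast_zmod_val m
  · exact ZMod.val_cast_of_lt (Finset.mem_range.mp hi)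

theorem sum_Ico_zero_eq_sum_zmod {M : Type*} [AddCommMonoid M] (f : ℤ → M) :
    ∑ i ∈ Finset.Ico 0 (n : ℤ), f i = ∑ m : ZMod n, f m.val := by
  rw [sum_zmod_val fun i => f i]
  refine Finset.sum_nbij' Int.toNat (fun i => (i : ℤ)) ?_ ?_ ?_ ?_ ?_ <;>
    simp only [Finset.mem_Ico, Finset.mem_range]
  · omega
  · omega
  · omega
  · omega
  · intro i hi
    rw [Int.toNat_of_nonneg hi.1]

theorem sum_Ico_neg_eq_sum_zmod {M : Type*} [AddCommMonoid M] (f : ℤ → M) :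
    ∑ i ∈ Finset.Ico (-n : ℤ) n, f i = ∑ m : ZMod n, (f m.val + f (m.val - n)) := by
  have hshift : ∑ i ∈ Finset.Ico (-n : ℤ) 0, f i = ∑ i ∈ Finset.Ico 0 (n : ℤ), f (i - n) := by
    simpa only [add_sub_cancel_right, neg_add_cancel, zero_add] using
      Finset.sum_Ico_add' (fun i => f (i - n)) (-n : ℤ) 0 n
  rw [Finset.sum_add_distrib, ← sum_Ico_zero_eq_sum_zmod f,
    ← sum_Ico_zero_eq_sum_zmod fun i => f (i - n), ← hshift, add_comm,
    ← Finset.sum_union (Finset.Ico_disjoint_Ico_consecutive _ _ _),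
    Finset.Ico_union_Ico_eq_Ico (by omega) (by omega)]

theorem twist_add {w : ℂ} {σ : ℝ} (hσ : σ ^ 2 = 1) (hw : w ^ n = σ) (a b : ZMod n) :
    twist w (a + b) = (if a.val + b.val < n then 1 else σ : ℝ) * (twist w a * twist w b) := by
  simp only [twist, ← pow_add]
  split_ifs with hab
  · rw [ZMod.val_add_of_lt hab, Complex.ofReal_one, one_mul]
  · rw [ZMod.val_add_val_of_le (not_lt.mp hab), pow_add, hw, mul_left_comm, ← Complex.ofReal_mul,
      ← sq, hσ, Complex.ofReal_one, mul_one]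

theorem perCorr_twist_mul {w : ℂ} {σ : ℝ} (hw : ‖w‖ = 1) (hσ : σ ^ 2 = 1) (hwn : w ^ n = σ)
    {a : ℤ → ℝ} (ha : ∀ i ∉ Finset.Ico 0 (n : ℤ), a i = 0) (u : ZMod n) :
    perCorr (fun m => twist w m * (a m.val : ℂ)) u =
      twist w u * (crossCorr (Finset.Ico 0 (n : ℤ)) a a u.val +
        σ * crossCorr (Finset.Ico 0 (n : ℤ)) a a (u.val - n) : ℝ) := by
  simp only [perCorr, crossCorr]
  rw [sum_Ico_zero_eq_sum_zmod fun i => a i * a (i + u.val),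
    sum_Ico_zero_eq_sum_zmod fun i => a i * a (i + (u.val - n)), Finset.mul_sum,
    ← Finset.sum_add_distrib, Complex.ofReal_sum, Finset.mul_sum]
  refine Finset.sum_congr rfl fun m _ => ?_
  have hwrap : (if m.val + u.val < n then 1 else σ) * a (m + u).val =
      a (m.val + u.val) + σ * a (m.val + (u.val - n)) := by
    split_ifs with hmu
    · rw [ZMod.val_add_of_lt hmu, ha (m.val + (u.val - n)) (by rw [Finset.mem_Ico]; omega)]
      push_cast
      ring
    · rw [ha (m.val + u.val) (by rw [Finset.mem_Ico]; omega), zero_add,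
        ← add_sub_assoc, ← Nat.cast_add, ZMod.val_add_val_of_le (not_lt.mp hmu), Nat.cast_add,
        add_sub_cancel_right]
  rw [twist_add hσ hwn, map_mul, Complex.conj_ofReal]
  calc _ = conj (twist w m) * twist w m * (twist w u * (a m.val *
        ((if m.val + u.val < n then 1 else σ) * a (m + u).val) : ℝ)) := by push_cast; ring
    _ = _ := by rw [conj_twist_mul_twist hw, hwrap, one_mul, mul_add, mul_left_comm (a _) σ]

theorem corrEnergy_eq_sum_norm_perCorr {w : ℂ} (hw : ‖w‖ = 1) (hwn : w ^ n = -1) {a : ℤ → ℝ}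
    (ha : ∀ i ∉ Finset.Ico 0 (n : ℤ), a i = 0) :
    corrEnergy (Finset.Ico 0 (n : ℤ)) a =
      (∑ u : ZMod n, ‖perCorr (fun m : ZMod n => (a m.val : ℂ)) u‖ ^ 2 +
        ∑ u : ZMod n, ‖perCorr (fun m : ZMod n => twist w m * (a m.val : ℂ)) u‖ ^ 2) / 2 := by
  have hT : Finset.Ico 0 (n : ℤ) - Finset.Ico 0 (n : ℤ) ⊆ Finset.Ico (-n : ℤ) n := by
    intro u hu
    obtain ⟨x, hx, y, hy, rfl⟩ := Finset.mem_sub.mp hu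
    rw [Finset.mem_Ico] at hx hy ⊢
    omega
  have hper (u : ZMod n) := perCorr_twist_mul (σ := 1) norm_one (by norm_num) (by simp) ha u
  have hneg (u : ZMod n) := perCorr_twist_mul (σ := -1) hw (by norm_num) (by simpa using hwn) ha u
  simp only [twist, one_pow, one_mul] at hper
  simp only [hper, hneg, norm_mul, norm_twist hw, one_mul, Complex.norm_real, Real.norm_eq_abs,
    sq_abs]
  rw [corrEnergy_eq_sum ha hT, sum_Ico_neg_eq_sum_zmod, ← Finset.sum_add_distrib, Finset.sum_div]
  exact Finset.sum_congr rfl fun u _ => by ring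

theorem sum_ite_val_lt {k : ℕ} (hk : k ≤ n) :
    ∑ m : ZMod n, (if m.val < k then 1 else -1 : ℝ) = 2 * k - n := by
  obtain ⟨j, rfl⟩ := Nat.exists_eq_add_of_le hk
  rw [sum_zmod_val fun i => (if i < k then 1 else -1 : ℝ), Finset.sum_range_add,
    Finset.sum_congr rfl fun i hi => if_pos (Finset.mem_range.mp hi),
    Finset.sum_congr rfl fun i _ => if_neg (Nat.not_lt.mpr (Nat.le_add_right k i))]
  simp only [Finset.sum_const, Finset.card_range, nsmul_eq_mul]
  push_cast
  ring

theorem perCorr_twist {w : ℂ} (hw : ‖w‖ = 1) (hwn : w ^ n = -1) (u : ZMod n) :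
    perCorr (twist w) u = (n - 2 * u.val : ℝ) * twist w u := by
  have hcount := sum_ite_val_lt (n := n) (k := n - u.val) (Nat.sub_le _ _)
  rw [Nat.cast_sub u.val_lt.le] at hcount
  rw [show (n - 2 * u.val : ℝ) = 2 * (n - u.val) - n by ring, ← hcount, Complex.ofReal_sum,
    Finset.sum_mul]
  refine Finset.sum_congr rfl fun m _ => ?_
  rw [twist_add (σ := -1) (by norm_num) (by simpa using hwn)]
  simp only [← Nat.lt_sub_iff_add_lt]
  linear_combination (if m.val < n - u.val then 1 else -1 : ℝ) * twist w u *
    conj_twist_mul_twist hw m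

theorem sum_twist_mul_twist_sub {w : ℂ} (hwn : w ^ n = -1) (c : ZMod n) :
    ∑ m, twist w m * twist w (c - m) = (2 * c.val + 2 - n : ℝ) * twist w c := by
  have hcount := sum_ite_val_lt (n := n) (k := c.val + 1) c.val_lt
  rw [show (2 * c.val + 2 - n : ℝ) = 2 * (c.val + 1 : ℕ) - n by push_cast; ring, ← hcount,
    Complex.ofReal_sum, Finset.sum_mul]
  refine Finset.sum_congr rfl fun m _ => ?_
  have hwrap : m.val + (c - m).val < n ↔ m.val < c.val + 1 := by
    have hc : (m + (c - m)).val = c.val := by rw [add_sub_cancel]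
    rcases lt_or_ge (m.val + (c - m).val) n with h | h
    · rw [ZMod.val_add_of_lt h] at hc
      omega
    · have := ZMod.val_add_val_of_le h
      have := (c - m).val_lt
      omega
  have htwist := twist_add (σ := -1) (by norm_num) (by simpa using hwn) m (c - m)
  rw [add_sub_cancel] at htwist
  rw [htwist, ← mul_assoc, ← Complex.ofReal_mul]
  simp only [hwrap]
  split_ifs <;> simp

theorem norm_sum_twist_sub_mul_twist_neg_sub_sq {w : ℂ} (hw : ‖w‖ = 1) (hwn : w ^ n = -1)
    (r : ZMod n) :
    ‖∑ m, twist w (m - r) * twist w (-m - r)‖ ^ 2 = (2 * ((-2 * r).val : ℝ) + 2 - n) ^ 2 := by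
  have hshift : ∑ m, twist w (m - r) * twist w (-m - r) =
      ∑ m, twist w m * twist w (-2 * r - m) := by
    rw [← Equiv.sum_comp (Equiv.addRight r)]
    refine Finset.sum_congr rfl fun m _ => ?_
    simp only [Equiv.coe_addRight, add_sub_cancel_right]
    congr 2
    ring
  rw [hshift, sum_twist_mul_twist_sub hwn, norm_mul, norm_twist hw, Complex.norm_real, mul_one,
    Real.norm_eq_abs, sq_abs]

theorem sum_norm_perCorr_twist_sq {w : ℂ} (hw : ‖w‖ = 1) (hwn : w ^ n = -1) :
    ∑ u : ZMod n, ‖perCorr (twist w) u‖ ^ 2 = ((n : ℝ) ^ 3 + 2 * n) / 3 := by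
  simp only [perCorr_twist hw hwn, norm_mul, norm_twist hw, Complex.norm_real, mul_one,
    Real.norm_eq_abs, sq_abs]
  have hsum (N : ℕ) (x : ℝ) : ∑ i ∈ Finset.range N, (x - 2 * i) ^ 2 =
      N * x ^ 2 - 2 * x * N * (N - 1) + 2 / 3 * N * (N - 1) * (2 * N - 1) := by
    induction N with
    | zero => simp
    | succ N ih => rw [Finset.sum_range_succ, ih]; push_cast; ring
  rw [sum_zmod_val fun i => (n - 2 * i : ℝ) ^ 2, hsum]
  ring

end Twist

section ExponentialSum

theorem inv_sin_pi_mul_le {x : ℝ} (hx0 : 0 < x) (hx1 : x < 1) :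
    (Real.sin (Real.pi * x))⁻¹ ≤ (x⁻¹ + (1 - x)⁻¹) / 2 := by
  wlog hx : x ≤ 1 / 2 generalizing x
  · have h := this (sub_pos.mpr hx1) (sub_lt_self 1 hx0) (by linarith)
    rwa [mul_sub, mul_one, Real.sin_pi_sub, sub_sub_cancel, add_comm] at h
  have hsin : 2 * x ≤ Real.sin (Real.pi * x) := by
    have h := Real.mul_le_sin (x := Real.pi * x) (by positivity) (by nlinarith [Real.pi_pos])
    rwa [← mul_assoc, div_mul_cancel₀ _ Real.pi_ne_zero] at h
  have hinv : 0 ≤ (1 - x)⁻¹ := inv_nonneg.mpr (by linarith)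
  calc (Real.sin (Real.pi * x))⁻¹ ≤ (2 * x)⁻¹ := inv_anti₀ (by positivity) hsin
    _ = x⁻¹ / 2 := by rw [mul_inv, div_eq_inv_mul]
    _ ≤ (x⁻¹ + (1 - x)⁻¹) / 2 := by linarith

variable {n : ℕ}

theorem norm_zeta : ‖zeta n‖ = 1 := by
  rw [zeta, show (Real.pi * Complex.I / n : ℂ) = ((Real.pi / n : ℝ) : ℂ) * Complex.I by
    push_cast; ring, Complex.norm_exp_ofReal_mul_I]

variable [NeZero n]

theorem zeta_pow_self : zeta n ^ n = -1 := by
  rw [zeta, ← Complex.exp_nat_mul, mul_div_cancel₀ _ (NeZero.ne (n : ℂ)), Complex.exp_pi_mul_I]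

theorem charTransform_twist (ψ : AddChar (ZMod n) ℂ) (w : ℂ) (k : ZMod n) :
    charTransform ψ (twist w) k = ∑ i ∈ Finset.range n, (w * ψ k) ^ i := by
  rw [← sum_zmod_val fun i => (w * ψ k) ^ i, charTransform]
  refine Finset.sum_congr rfl fun m _ => ?_
  rw [mul_pow, ← AddChar.map_nsmul_eq_pow, nsmul_eq_mul, ZMod.natCast_zmod_val, twist]

theorem norm_charTransform_twist_zeta (k : ZMod n) :
    ‖charTransform ZMod.stdAddChar (twist (zeta n)) k‖ =
      |Real.sin (Real.pi * ((2 * k.val + 1) / (2 * n)))|⁻¹ := by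
  have hpow : (zeta n * ZMod.stdAddChar k) ^ n = -1 := by
    rw [mul_pow, zeta_pow_self, ← AddChar.map_nsmul_eq_pow, nsmul_eq_mul, ZMod.natCast_self,
      zero_mul, AddChar.map_zero_eq_one, mul_one]
  have hne : zeta n * ZMod.stdAddChar k ≠ 1 := by
    intro h
    rw [h, one_pow] at hpow
    norm_num at hpow
  have hexp : zeta n * ZMod.stdAddChar k =
      Complex.exp (Complex.I * (Real.pi * (2 * k.val + 1) / n : ℝ)) := by
    conv_lhs => rw [← ZMod.natCast_zmod_val k]
    rw [← Int.cast_natCast, ZMod.stdAddChar_coe, zeta, ← Complex.exp_add]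
    congr 1
    push_cast
    ring
  calc _ = ‖(-1 - 1 : ℂ)‖ / (2 * |Real.sin (Real.pi * (2 * k.val + 1) / n / 2)|) := by
        rw [charTransform_twist, geom_sum_eq hne, hpow, hexp, norm_div,
          Complex.norm_exp_I_mul_ofReal_sub_one, norm_mul, Real.norm_eq_abs, Real.norm_eq_abs,
          abs_two]
    _ = 2 / (2 * |Real.sin (Real.pi * ((2 * k.val + 1) / (2 * n)))|) := by
        rw [show Real.pi * (2 * k.val + 1) / n / 2 = Real.pi * ((2 * k.val + 1) / (2 * n)) by ring]
        norm_num only [norm_neg, Complex.norm_ofNat]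
    _ = _ := by rw [div_mul_cancel_left₀ two_ne_zero]

theorem norm_charTransform_twist_zeta_le (k : ZMod n) :
    ‖charTransform ZMod.stdAddChar (twist (zeta n)) k‖ ≤
      n * (((k.val + 1 : ℕ) : ℝ)⁻¹ + ((n - k.val : ℕ) : ℝ)⁻¹) := by
  have hkn : (k.val : ℝ) + 1 ≤ n := by exact_mod_cast k.val_lt
  have hk : (0 : ℝ) ≤ k.val := k.val.cast_nonneg
  have hn : (0 : ℝ) < n := (add_pos_of_nonneg_of_pos hk one_pos).trans_le hkn
  set x : ℝ := (2 * k.val + 1) / (2 * n) with hx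
  have hx0 : 0 < x := div_pos (by linarith) (by linarith)
  have hx1 : x < 1 := (div_lt_one (by linarith)).mpr (by linarith)
  have hsin : 0 ≤ Real.sin (Real.pi * x) :=
    Real.sin_nonneg_of_nonneg_of_le_pi (by positivity)
      (mul_le_of_le_one_right Real.pi_nonneg hx1.le)
  have hleft : x⁻¹ / 2 ≤ n * ((k.val + 1 : ℕ) : ℝ)⁻¹ := by
    calc x⁻¹ / 2 = n / (2 * k.val + 1) := by rw [hx]; field_simp
      _ ≤ n / (k.val + 1) := by gcongr; linarith
      _ = n * ((k.val + 1 : ℕ) : ℝ)⁻¹ := by rw [Nat.cast_add_one, div_eq_mul_inv]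
  have hright : (1 - x)⁻¹ / 2 ≤ n * ((n - k.val : ℕ) : ℝ)⁻¹ := by
    have hsub : 1 - x = (2 * (n - k.val) - 1) / (2 * n) := by rw [hx]; field_simp; ring
    calc (1 - x)⁻¹ / 2 = n / (2 * (n - k.val) - 1) := by rw [hsub]; field_simp
      _ ≤ n / (n - k.val) := div_le_div_of_nonneg_left hn.le (by linarith) (by linarith)
      _ = n * ((n - k.val : ℕ) : ℝ)⁻¹ := by rw [Nat.cast_sub k.val_lt.le, div_eq_mul_inv]
  calc _ = (Real.sin (Real.pi * x))⁻¹ := by rw [norm_charTransform_twist_zeta, abs_of_nonneg hsin]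
    _ ≤ (x⁻¹ + (1 - x)⁻¹) / 2 := inv_sin_pi_mul_le hx0 hx1
    _ ≤ n * (((k.val + 1 : ℕ) : ℝ)⁻¹ + ((n - k.val : ℕ) : ℝ)⁻¹) := by linarith

theorem sum_norm_charTransform_twist_zeta_le :
    ∑ k : ZMod n, ‖charTransform ZMod.stdAddChar (twist (zeta n)) k‖ ≤
      2 * n * (1 + Real.log n) := by
  have hreflect : ∑ i ∈ Finset.range n, ((n - i : ℕ) : ℝ)⁻¹ =
      ∑ i ∈ Finset.range n, ((i + 1 : ℕ) : ℝ)⁻¹ := by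
    rw [← Finset.sum_range_reflect]
    refine Finset.sum_congr rfl fun i hi => ?_
    have := Finset.mem_range.mp hi
    congr 2
    omega
  have hharmonic : ∑ i ∈ Finset.range n, ((i + 1 : ℕ) : ℝ)⁻¹ ≤ 1 + Real.log n := by
    simpa [harmonic] using harmonic_le_one_add_log n
  calc _ ≤ ∑ k : ZMod n, n * (((k.val + 1 : ℕ) : ℝ)⁻¹ + ((n - k.val : ℕ) : ℝ)⁻¹) :=
        Finset.sum_le_sum fun k _ => norm_charTransform_twist_zeta_le k
    _ = n * (2 * ∑ i ∈ Finset.range n, ((i + 1 : ℕ) : ℝ)⁻¹) := by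
        rw [sum_zmod_val fun i => n * (((i + 1 : ℕ) : ℝ)⁻¹ + ((n - i : ℕ) : ℝ)⁻¹),
          ← Finset.mul_sum, Finset.sum_add_distrib, hreflect, ← two_mul]
    _ ≤ 2 * n * (1 + Real.log n) := by
        rw [mul_comm 2 (n : ℝ), mul_assoc]
        gcongr

end ExponentialSum

section LegendreSequence

theorem sum_norm_perCorr_quadraticChar_sq {F : Type*} [Field F] [Fintype F] [DecidableEq F]
    (hF : ringChar F ≠ 2) :
    ∑ u, ‖perCorr (fun m : F => (quadraticChar F m : ℂ)) u‖ ^ 2 =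
      (Fintype.card F : ℝ) * (Fintype.card F - 1) := by
  have hcorr (u : F) : perCorr (fun m : F => (quadraticChar F m : ℂ)) u =
      ((if u = 0 then (Fintype.card F : ℝ) else 0) - 1 : ℝ) := by
    have h := congrArg (Int.cast : ℤ → ℂ) (sum_quadraticChar_mul_add hF u)
    push_cast [Complex.ofReal_sub, apply_ite (Complex.ofReal)] at h ⊢
    rw [← h]
    exact Finset.sum_congr rfl fun m _ => by rw [map_intCast, mul_comm]
  have hsq (u : F) : ((if u = 0 then (Fintype.card F : ℝ) else 0) - 1) ^ 2 =
      (if u = 0 then (Fintype.card F : ℝ) * (Fintype.card F - 2) else 0) + 1 := by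
    split_ifs <;> ring
  simp only [hcorr, Complex.norm_real, Real.norm_eq_abs, sq_abs, hsq]
  rw [Finset.sum_add_distrib, Finset.sum_ite_eq' Finset.univ, if_pos (Finset.mem_univ _)]
  simp only [Finset.sum_const, Finset.card_univ, nsmul_eq_mul]
  ring

variable {p : ℕ} [Fact p.Prime]

theorem abs_sum_norm_perCorr_twist_mul_quadraticChar_sub_le (hp : p ≠ 2) (r : ZMod p) :
    |∑ u, ‖perCorr (fun m : ZMod p =>
          twist (zeta p) m * (quadraticChar (ZMod p) (m + r) : ℂ)) u‖ ^ 2 -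
      ((4 * (p : ℝ) ^ 2 - 4) / 3 + (2 * ((-2 * r).val : ℝ) + 2 - p) ^ 2)| ≤
      16 * p * (3 * (p : ℝ) ^ (3 / 4 : ℝ) + 2) * (1 + Real.log p) ^ 4 := by
  set d : ZMod p → ℂ := fun m => twist (zeta p) (m - r) with hd
  have hp0 : (0 : ℝ) < p := by exact_mod_cast (Fact.out : p.Prime).pos
  have hcorr (u : ZMod p) := perCorr_comp_add_right
    (fun m : ZMod p => d m * (quadraticChar (ZMod p) m : ℂ)) r u
  simp only [hd, add_sub_cancel_right] at hcorr
  have hpair : ‖∑ m, d m * d (-m)‖ ^ 2 = (2 * ((-2 * r).val : ℝ) + 2 - p) ^ 2 :=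
    norm_sum_twist_sub_mul_twist_neg_sub_sq norm_zeta zeta_pow_self r
  have hper : ∑ u, ‖perCorr d u‖ ^ 2 = ((p : ℝ) ^ 3 + 2 * p) / 3 := by
    have hdu (u : ZMod p) := perCorr_comp_add_right (twist (zeta p)) (-r) u
    simp only [← sub_eq_add_neg] at hdu
    simp only [hd, hdu]
    exact sum_norm_perCorr_twist_sq norm_zeta zeta_pow_self
  have hfourier : ∑ k, ‖charTransform ZMod.stdAddChar d k‖ ≤ 2 * p * (1 + Real.log p) := by
    have hdk (k : ZMod p) :=
      norm_charTransform_comp_add_right ZMod.stdAddChar (twist (zeta p)) (-r) k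
    simp only [← sub_eq_add_neg] at hdk
    simp only [hd, hdk]
    exact sum_norm_charTransform_twist_zeta_le
  have h := abs_sum_norm_perCorr_mul_quadraticChar_sq_sub_le (F := ZMod p)
    (by rwa [ZMod.ringChar_zmod_n]) (ZMod.isPrimitive_stdAddChar p) (d := d)
    fun m => norm_twist norm_zeta _
  have hmain : 2 * (p : ℝ) ^ 2 + (2 * ((-2 * r).val : ℝ) + 2 - p) ^ 2 -
      2 / (p : ℝ) * (((p : ℝ) ^ 3 + 2 * p) / 3) =
      (4 * (p : ℝ) ^ 2 - 4) / 3 + (2 * ((-2 * r).val : ℝ) + 2 - p) ^ 2 := by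
    field_simp
    ring
  rw [hpair, hper, ZMod.card, hmain] at h
  simp only [hcorr]
  refine h.trans ?_
  calc _ ≤ (3 * (p : ℝ) ^ (3 / 4 : ℝ) + 2) * (2 * p * (1 + Real.log p)) ^ 4 / (p : ℝ) ^ 3 := by
        gcongr
    _ = _ := by
        field_simp
        ring

theorem abs_corrEnergy_legendre_sub_le (hp : p ≠ 2) (r : ZMod p) {a : ℤ → ℝ}
    (ha : ∀ i ∉ Finset.Ico 0 (p : ℤ), a i = 0)
    (haχ : ∀ m : ZMod p, a m.val = quadraticChar (ZMod p) (m + r)) :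
    |corrEnergy (Finset.Ico 0 (p : ℤ)) a -
      ((7 * (p : ℝ) ^ 2 - 3 * p - 4) / 6 + (2 * ((-2 * r).val : ℝ) + 2 - p) ^ 2 / 2)| ≤
      8 * p * (3 * (p : ℝ) ^ (3 / 4 : ℝ) + 2) * (1 + Real.log p) ^ 4 := by
  have hper : ∑ u, ‖perCorr (fun m : ZMod p => (quadraticChar (ZMod p) (m + r) : ℂ)) u‖ ^ 2 =
      (p : ℝ) * (p - 1) := by
    simp only [perCorr_comp_add_right (fun m : ZMod p => (quadraticChar (ZMod p) m : ℂ)) r]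
    rw [sum_norm_perCorr_quadraticChar_sq (by rwa [ZMod.ringChar_zmod_n]), ZMod.card]
  have htwist := abs_sum_norm_perCorr_twist_mul_quadraticChar_sub_le hp r
  have hE := corrEnergy_eq_sum_norm_perCorr norm_zeta zeta_pow_self ha
  simp only [haχ, Complex.ofReal_intCast] at hE
  rw [hE, hper]
  rw [abs_le] at htwist ⊢
  constructor <;> linarith

end LegendreSequence

section RotationLimit

open Filter Topology

theorem tendsto_int_floor_mul_div_atTop (s : ℝ) :
    Tendsto (fun x : ℝ => (⌊x * s⌋ : ℝ) / x) atTop (𝓝 s) := by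
  have hlower : Tendsto (fun x : ℝ => s - 1 / x) atTop (𝓝 s) := by
    simpa using (tendsto_id.const_div_atTop (1 : ℝ)).const_sub s
  refine tendsto_of_tendsto_of_tendsto_of_le_of_le' hlower tendsto_const_nhds ?_ ?_ <;>
    filter_upwards [eventually_gt_atTop 0] with x hx
  · rw [le_div_iff₀ hx, sub_mul, div_mul_cancel₀ _ hx.ne', mul_comm]
    exact (Int.sub_one_lt_floor _).le
  · rw [div_le_iff₀ hx, mul_comm s]
    exact Int.floor_le _

theorem eventually_neg_two_mul_floor_emod_of_nonpos {s : ℝ} (hs1 : -(1 / 2) < s) (hs : s ≤ 0) :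
    ∀ᶠ n : ℕ in atTop, -2 * ⌊(n : ℝ) * s⌋ % (n : ℤ) = -2 * ⌊(n : ℝ) * s⌋ := by
  have hfloor := (tendsto_int_floor_mul_div_atTop s).comp tendsto_natCast_atTop_atTop
  filter_upwards [eventually_gt_atTop 0, hfloor.eventually_const_lt hs1] with n hn hr
  have hn' : (0 : ℝ) < n := Nat.cast_pos.mpr hn
  have hr0 : ⌊(n : ℝ) * s⌋ ≤ 0 := Int.floor_nonpos (mul_nonpos_of_nonneg_of_nonpos hn'.le hs)
  have hrn : -2 * ⌊(n : ℝ) * s⌋ < n := by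
    rw [Function.comp_apply, lt_div_iff₀ hn'] at hr
    have : (-2 * ⌊(n : ℝ) * s⌋ : ℝ) < n := by linarith
    exact_mod_cast this
  exact Int.emod_eq_of_lt (by omega) hrn

theorem eventually_neg_two_mul_floor_emod_of_pos {s : ℝ} (hs : 0 < s) (hs2 : s ≤ 1 / 2) :
    ∀ᶠ n : ℕ in atTop, -2 * ⌊(n : ℝ) * s⌋ % (n : ℤ) = -2 * ⌊(n : ℝ) * s⌋ + n := by
  have hfloor := (tendsto_int_floor_mul_div_atTop s).comp tendsto_natCast_atTop_atTop
  filter_upwards [eventually_gt_atTop 0, hfloor.eventually_const_lt hs] with n hn hr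
  have hn' : (0 : ℝ) < n := Nat.cast_pos.mpr hn
  have hr0 : 0 < ⌊(n : ℝ) * s⌋ := by
    rw [Function.comp_apply, lt_div_iff₀ hn', zero_mul] at hr
    exact_mod_cast hr
  have hrn : 2 * ⌊(n : ℝ) * s⌋ ≤ n := by
    have : (2 * ⌊(n : ℝ) * s⌋ : ℝ) ≤ n := by nlinarith [Int.floor_le ((n : ℝ) * s)]
    exact_mod_cast this
  rw [← Int.add_emod_right, Int.emod_eq_of_lt (by omega) (by omega)]

theorem tendsto_rotation_term {s : ℝ} (hs1 : -(1 / 2) < s) (hs2 : s ≤ 1 / 2) :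
    Tendsto (fun n : ℕ => ((2 * ((-2 * ⌊(n : ℝ) * s⌋ % (n : ℤ) : ℤ) : ℝ) + 2 - n) / n) ^ 2) atTop
      (𝓝 ((4 * |s| - 1) ^ 2)) := by
  have hfloor := (tendsto_int_floor_mul_div_atTop s).comp tendsto_natCast_atTop_atTop
  have hinv : Tendsto (fun n : ℕ => 2 / (n : ℝ)) atTop (𝓝 0) :=
    tendsto_natCast_atTop_atTop.const_div_atTop 2
  have hlim := (hfloor.const_mul (-4)).add hinv
  rcases le_or_gt s 0 with hs | hs
  · rw [abs_of_nonpos hs, show (4 * -s - 1) ^ 2 = (-4 * s + 0 - 1) ^ 2 by ring]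
    refine ((hlim.sub_const 1).pow 2).congr' ?_
    filter_upwards [eventually_gt_atTop 0,
      eventually_neg_two_mul_floor_emod_of_nonpos hs1 hs] with n hn hmod
    rw [hmod, Function.comp_apply]
    push_cast
    field_simp
    ring
  · rw [abs_of_pos hs, show (4 * s - 1) ^ 2 = (-4 * s + 0 + 1) ^ 2 by ring]
    refine ((hlim.add_const 1).pow 2).congr' ?_
    filter_upwards [eventually_gt_atTop 0,
      eventually_neg_two_mul_floor_emod_of_pos hs hs2] with n hn hmod
    rw [hmod, Function.comp_apply]
    push_cast
    field_simp
    ring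

theorem tendsto_legendre_main_term {s : ℝ} (hs1 : -(1 / 2) < s) (hs2 : s ≤ 1 / 2) :
    Tendsto (fun n : ℕ => ((7 * (n : ℝ) ^ 2 - 3 * n - 4) / 6 +
        (2 * ((-2 * ⌊(n : ℝ) * s⌋ % (n : ℤ) : ℤ) : ℝ) + 2 - n) ^ 2 / 2) / (n : ℝ) ^ 2) atTop
      (𝓝 (7 / 6 + 8 * (|s| - 1 / 4) ^ 2)) := by
  have hn : Tendsto (fun n : ℕ => (n : ℝ)) atTop atTop := tendsto_natCast_atTop_atTop
  have hn2 : Tendsto (fun n : ℕ => (n : ℝ) ^ 2) atTop atTop :=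
    (tendsto_pow_atTop two_ne_zero).comp hn
  have hlim := (((hn.const_div_atTop (1 / 2)).const_sub (7 / 6)).sub
    (hn2.const_div_atTop (2 / 3))).add ((tendsto_rotation_term hs1 hs2).div_const 2)
  rw [show 7 / 6 - 0 - 0 + (4 * |s| - 1) ^ 2 / 2 = 7 / 6 + 8 * (|s| - 1 / 4) ^ 2 by ring] at hlim
  refine hlim.congr' ?_
  filter_upwards [eventually_gt_atTop 0] with n hn0
  field_simp
  ring

theorem tendsto_rpow_mul_log_pow_div :
    Tendsto (fun x : ℝ => 8 * (3 * x ^ (3 / 4 : ℝ) + 2) * (1 + Real.log x) ^ 4 / x) atTop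
      (𝓝 0) := by
  have hconst {c : ℝ} (hc : 0 < c) (b : ℝ) : (fun _ : ℝ => b) =o[atTop] (fun x : ℝ => x ^ c) :=
    Asymptotics.isLittleO_const_left.mpr
      (.inr (tendsto_norm_atTop_atTop.comp (tendsto_rpow_atTop hc)))
  have hlog : (fun x : ℝ => (1 + Real.log x) ^ 4) =o[atTop] (fun x : ℝ => x ^ (1 / 4 : ℝ)) := by
    have hroot : (fun x : ℝ => 1 + Real.log x) =o[atTop] (fun x : ℝ => x ^ (1 / 16 : ℝ)) :=
      (hconst (by norm_num) 1).add (isLittleO_log_rpow_atTop (by norm_num))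
    refine (hroot.pow (n := 4) (by norm_num)).congr' .rfl ?_
    filter_upwards [eventually_ge_atTop 0] with x hx
    rw [← Real.rpow_mul_natCast hx]
    norm_num
  have hrpow : (fun x : ℝ => 8 * (3 * x ^ (3 / 4 : ℝ) + 2)) =O[atTop]
      (fun x : ℝ => x ^ (3 / 4 : ℝ)) :=
    (((Asymptotics.isBigO_refl _ _).const_mul_left 3).add
      (hconst (by norm_num) 2).isBigO).const_mul_left 8
  refine ((hrpow.mul_isLittleO hlog).congr' .rfl ?_).tendsto_div_nhds_zero
  filter_upwards [eventually_gt_atTop 0] with x hx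
  rw [← Real.rpow_add hx]
  norm_num

theorem seqRotate_ternaryLegendreSeq {p : ℕ} [Fact p.Prime] (s : ℝ) (m : ZMod p) :
    seqRotate p s (ternaryLegendreSeq p) m.val =
      quadraticChar (ZMod p) (m + (⌊(p : ℝ) * s⌋ : ℤ)) := by
  have hp : (0 : ℤ) < p := by exact_mod_cast (Fact.out : p.Prime).pos
  have hm : 0 ≤ (m.val : ℤ) ∧ (m.val : ℤ) < p := ⟨by omega, by exact_mod_cast m.val_lt⟩
  rw [seqRotate, if_pos hm, ternaryLegendreSeq,
    if_pos ⟨Int.emod_nonneg _ hp.ne', Int.emod_lt_of_pos _ hp⟩,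
    ← jacobiSym.legendreSym.to_jacobiSym, ← legendreSym.mod, legendreSym, Int.cast_add,
    Int.cast_natCast, ZMod.natCast_zmod_val, Int.cast_natCast]

theorem seqRotate_eq_zero {n : ℤ} (s : ℝ) (a : ℤ → ℝ) :
    ∀ i ∉ Finset.Ico 0 n, seqRotate n s a i = 0 :=
  fun _ hi => if_neg (by rwa [Finset.mem_Ico] at hi)

theorem tendsto_corrEnergy_ternaryLegendreSeq {ι : Type*} {l : Filter ι} {s : ℝ}
    (hs1 : -(1 / 2) < s) (hs2 : s ≤ 1 / 2) {p : ι → ℕ} (hp : ∀ k, (p k).Prime ∧ Odd (p k))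
    (hlim : Tendsto p l atTop) :
    Tendsto (fun k => corrEnergy (Finset.Ico 0 (p k : ℤ))
        (seqRotate (p k) s (ternaryLegendreSeq (p k))) / (p k : ℝ) ^ 2) l
      (𝓝 (7 / 6 + 8 * (|s| - 1 / 4) ^ 2)) := by
  have herror := (tendsto_rpow_mul_log_pow_div.comp tendsto_natCast_atTop_atTop).comp hlim
  refine (tendsto_iff_of_dist (squeeze_zero (fun _ => dist_nonneg) (fun k => ?_) herror)).mp
    ((tendsto_legendre_main_term hs1 hs2).comp hlim)
  have : Fact (p k).Prime := ⟨(hp k).1⟩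
  have hp0 : (0 : ℝ) < p k := by exact_mod_cast (hp k).1.pos
  have hp2 : p k ≠ 2 := fun h => absurd (h ▸ (hp k).2) (by decide)
  have hval : ((-2 * ((⌊(p k : ℝ) * s⌋ : ℤ) : ZMod (p k))).val : ℝ) =
      ((-2 * ⌊(p k : ℝ) * s⌋ % (p k : ℤ) : ℤ) : ℝ) := by
    rw [← ZMod.val_intCast]
    push_cast
    rfl
  have hE := abs_corrEnergy_legendre_sub_le hp2 _ (seqRotate_eq_zero s (ternaryLegendreSeq (p k)))
    (seqRotate_ternaryLegendreSeq s)
  rw [hval] at hE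
  rw [dist_comm, Real.dist_eq]
  simp only [Function.comp_apply]
  rw [← sub_div, abs_div, abs_of_pos (pow_pos hp0 2), div_le_div_iff₀ (pow_pos hp0 2) hp0]
  refine (mul_le_mul_of_nonneg_right hE hp0.le).trans_eq ?_
  ring

end RotationLimit

section Arrays

open Filter Topology
open scoped Pointwise

/-- The index set `[0, n) × [0, m)` of an array of size `n × m`. -/
def box (n m : ℤ) : Finset (ℤ × ℤ) := Finset.Ico 0 n ×ˢ Finset.Ico 0 m

/-- The ternary Legendre array of size `p × q`, the product of two ternary Legendre sequences. It
replaces the unspecified entries of a Legendre array by zeros. -/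
def ternaryLegendreArray (p q : ℕ) : ℤ × ℤ → ℝ :=
  fun x => ternaryLegendreSeq p x.1 * ternaryLegendreSeq q x.2

variable {n m : ℤ} {A : ℤ × ℤ → ℝ}

theorem mem_box {x : ℤ × ℤ} : x ∈ box n m ↔ 0 ≤ x.1 ∧ x.1 < n ∧ 0 ≤ x.2 ∧ x.2 < m := by
  simp only [box, Finset.mem_product, Finset.mem_Ico, and_assoc]

theorem IsArray.eq_zero (hA : IsArray n m A) : ∀ x ∉ box n m, A x = 0 := fun x hx => by
  contrapose! hx
  exact mem_box.mpr (hA x.1 x.2 hx)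

theorem IsArray.autocorr_eq_crossCorr (hA : IsArray n m A) (u : ℤ × ℤ) :
    autocorr A u.1 u.2 = crossCorr (box n m) A A u := by
  have hsupp : ∀ i j, A (i, j) * A (i + u.1, j + u.2) ≠ 0 →
      i ∈ Finset.Ico 0 n ∧ j ∈ Finset.Ico 0 m := fun i j h => by
    simpa only [Finset.mem_Ico, and_assoc] using hA i j (left_ne_zero_of_mul h)
  have hrow : ∀ i, ∑ᶠ j, A (i, j) * A (i + u.1, j + u.2) =
      ∑ j ∈ Finset.Ico 0 m, A (i, j) * A (i + u.1, j + u.2) := fun i =>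
    finsum_eq_sum_of_support_subset _ fun j hj => (hsupp i j hj).2
  rw [autocorr, crossCorr, box, Finset.sum_product]
  simp only [hrow]
  refine finsum_eq_sum_of_support_subset _ fun i hi => ?_
  obtain ⟨j, -, hj⟩ := Finset.exists_ne_zero_of_sum_ne_zero hi
  exact (hsupp i j hj).1

theorem IsArray.finsum_autocorr_sq (hA : IsArray n m A) :
    ∑ᶠ u ∈ {u : ℤ × ℤ | u ≠ (0, 0)}, autocorr A u.1 u.2 ^ 2 =
      corrEnergy (box n m) A - crossCorr (box n m) A A 0 ^ 2 := by
  have hsupp : (Function.support fun u => crossCorr (box n m) A A u ^ 2) ⊆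
      ↑(box n m - box n m) := fun u hu => by
    by_contra h
    exact hu (pow_eq_zero_iff two_ne_zero |>.mpr (crossCorr_eq_zero hA.eq_zero h))
  have hinsert : insert (0 : ℤ × ℤ) {u | u ≠ 0} = Set.univ := by
    ext u
    simpa using em (u = 0)
  simp only [hA.autocorr_eq_crossCorr, Prod.mk_zero_zero]
  rw [eq_sub_iff_add_eq', ← finsum_mem_insert' _ (by simp)
    ((Finset.finite_toSet _).subset (Set.inter_subset_right.trans hsupp)), hinsert,
    finsum_mem_univ, corrEnergy, finsum_eq_sum_of_support_subset _ hsupp]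

theorem IsBinaryArray.crossCorr_zero (hA : IsBinaryArray n m A) (hn : 0 ≤ n) (hm : 0 ≤ m) :
    crossCorr (box n m) A A 0 = n * m := by
  have hone : ∀ x ∈ box n m, A x * A (x + 0) = 1 := fun x hx => by
    obtain ⟨hi, hin, hj, hjm⟩ := mem_box.mp hx
    rw [add_zero, mul_self_eq_one_iff]
    exact hA.2 x.1 x.2 hi hin hj hjm
  rw [crossCorr, Finset.sum_congr rfl hone, Finset.sum_const, nsmul_one, box, Finset.card_product,
    Int.card_Ico, Int.card_Ico, sub_zero, sub_zero, Nat.cast_mul, ← Int.cast_natCast n.toNat,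
    ← Int.cast_natCast m.toNat, Int.toNat_of_nonneg hn, Int.toNat_of_nonneg hm]

theorem IsBinaryArray.one_div_meritFactor (hA : IsBinaryArray n m A) (hn : 0 < n) (hm : 0 < m) :
    1 / meritFactor n m A = corrEnergy (box n m) A / ((n : ℝ) * m) ^ 2 - 1 := by
  have hnm : ((n : ℝ) * m) ^ 2 ≠ 0 := by positivity
  rw [meritFactor, one_div_div, hA.1.finsum_autocorr_sq, hA.crossCorr_zero hn.le hm.le, sub_div,
    div_self hnm]

theorem IsBinaryArray.abs_le_one (hA : IsBinaryArray n m A) (x : ℤ × ℤ) : |A x| ≤ 1 := by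
  by_cases hx : x ∈ box n m
  · obtain ⟨hi, hin, hj, hjm⟩ := mem_box.mp hx
    rcases hA.2 x.1 x.2 hi hin hj hjm with h | h <;> simp [h]
  · simp [hA.1.eq_zero x hx]

theorem isArray_arrRotate (n m : ℤ) (s t : ℝ) (A : ℤ × ℤ → ℝ) :
    IsArray n m (arrRotate n m s t A) := fun i j h => by
  by_contra hij
  exact h (if_neg hij)

theorem IsBinaryArray.arrRotate (hA : IsBinaryArray n m A) (hn : 0 < n) (hm : 0 < m) (s t : ℝ) :
    IsBinaryArray n m (arrRotate n m s t A) := by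
  refine ⟨isArray_arrRotate n m s t A, fun i j hi hin hj hjm => ?_⟩
  rw [_root_.arrRotate, if_pos ⟨hi, hin, hj, hjm⟩]
  exact hA.2 _ _ (Int.emod_nonneg _ hn.ne') (Int.emod_lt_of_pos _ hn)
    (Int.emod_nonneg _ hm.ne') (Int.emod_lt_of_pos _ hm)

theorem arrRotate_sub (n m : ℤ) (s t : ℝ) (A B : ℤ × ℤ → ℝ) :
    arrRotate n m s t (A - B) = arrRotate n m s t A - arrRotate n m s t B := by
  ext x
  simp only [arrRotate, Pi.sub_apply]
  split_ifs <;> simp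

theorem arrRotate_mul (n m : ℤ) (s t : ℝ) (a b : ℤ → ℝ) :
    arrRotate n m s t (fun x => a x.1 * b x.2) =
      fun x => seqRotate n s a x.1 * seqRotate m t b x.2 := by
  ext x
  simp only [arrRotate, seqRotate, ite_zero_mul_ite_zero, and_assoc]

theorem eq_neg_emod_of_add_emod_eq_zero {i r : ℤ} (hi : 0 ≤ i) (hin : i < n)
    (h : (i + r) % n = 0) : i = -r % n := by
  have hmod : i + r ≡ 0 [ZMOD n] := h.trans (Int.zero_emod n).symm
  have hmod' : i ≡ -r [ZMOD n] := by simpa using hmod.add_right (-r)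
  rw [← hmod', Int.emod_eq_of_lt hi hin]

theorem corrEnergy_arrRotate_le {n m : ℕ} (hn : 0 < n) (hm : 0 < m)
    (hA : ∀ x, |A x| ≤ 1) (hcross : ∀ x, A x ≠ 0 → x.1 = 0 ∨ x.2 = 0) (s t : ℝ) :
    corrEnergy (box n m) (arrRotate n m s t A) ≤ ((n : ℝ) + m) ^ 3 := by
  have hn' : (0 : ℤ) < n := by exact_mod_cast hn
  have hm' : (0 : ℤ) < m := by exact_mod_cast hm
  set i₀ : ℤ := -⌊(n : ℝ) * s⌋ % n
  set j₀ : ℤ := -⌊(m : ℝ) * t⌋ % m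
  set T : Finset (ℤ × ℤ) := {i₀} ×ˢ Finset.Ico 0 (m : ℤ) ∪ Finset.Ico 0 (n : ℤ) ×ˢ {j₀}
  have hi₀ : {i₀} ⊆ Finset.Ico 0 (n : ℤ) := by
    simpa using ⟨Int.emod_nonneg _ hn'.ne', Int.emod_lt_of_pos _ hn'⟩
  have hj₀ : {j₀} ⊆ Finset.Ico 0 (m : ℤ) := by
    simpa using ⟨Int.emod_nonneg _ hm'.ne', Int.emod_lt_of_pos _ hm'⟩
  have hT : T ⊆ box n m := Finset.union_subset (Finset.product_subset_product_left hi₀)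
    (Finset.product_subset_product_right hj₀)
  have hcard : (T.card : ℝ) ≤ (n : ℝ) + m := by
    have h := Finset.card_union_le ({i₀} ×ˢ Finset.Ico 0 (m : ℤ)) (Finset.Ico 0 (n : ℤ) ×ˢ {j₀})
    simp only [Finset.card_product, Finset.card_singleton, Int.card_Ico, sub_zero,
      Int.toNat_natCast, one_mul, mul_one] at h
    exact_mod_cast h.trans_eq (add_comm _ _)
  have hsupp : ∀ x ∉ T, arrRotate n m s t A x = 0 := fun x hx => by
    contrapose! hx
    obtain ⟨hi, hin, hj, hjm⟩ := isArray_arrRotate n m s t A x.1 x.2 hx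
    rw [arrRotate, if_pos ⟨hi, hin, hj, hjm⟩] at hx
    simp only [T, Finset.mem_union, Finset.mem_product, Finset.mem_singleton, Finset.mem_Ico]
    exact (hcross _ hx).imp (fun h => ⟨eq_neg_emod_of_add_emod_eq_zero hi hin h, hj, hjm⟩)
      (fun h => ⟨⟨hi, hin⟩, eq_neg_emod_of_add_emod_eq_zero hj hjm h⟩)
  have hle : ∀ x, |arrRotate n m s t A x| ≤ 1 := fun x => by
    rw [arrRotate]
    split_ifs
    · exact hA _
    · simp
  rw [corrEnergy_eq_of_subset hT hsupp]
  exact (corrEnergy_le_card_pow_three hsupp hle).trans (by gcongr)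

theorem ternaryLegendreSeq_zero {p : ℕ} (hp : 1 < p) : ternaryLegendreSeq p 0 = 0 := by
  simp [ternaryLegendreSeq, jacobiSym.zero_left hp]

theorem IsLegendreArray.sub_ternaryLegendreArray {p q : ℕ} {X : ℤ × ℤ → ℝ}
    (hX : IsLegendreArray p q X) (hp : 1 < p) (hq : 1 < q) (x : ℤ × ℤ) :
    (X - ternaryLegendreArray p q) x = if x.1 = 0 ∨ x.2 = 0 then X x else 0 := by
  rw [Pi.sub_apply, ternaryLegendreArray]
  split_ifs with h
  · rcases h with h | h <;> simp [h, ternaryLegendreSeq_zero, hp, hq]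
  · rw [sub_eq_zero]
    by_cases hx : x ∈ box p q
    · obtain ⟨hi, hip, hj, hjq⟩ := mem_box.mp hx
      rw [ternaryLegendreSeq, ternaryLegendreSeq, if_pos ⟨hi, hip⟩, if_pos ⟨hj, hjq⟩]
      exact hX.2 x.1 x.2 (by omega) hip (by omega) hjq
    · rw [hX.1.1.eq_zero x hx, ternaryLegendreSeq, ternaryLegendreSeq, ite_zero_mul_ite_zero,
        if_neg (by rwa [mem_box, ← and_assoc] at hx)]

theorem IsLegendreArray.corrEnergy_arrRotate_sub_le {p q : ℕ} {X : ℤ × ℤ → ℝ}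
    (hX : IsLegendreArray p q X) (hp : 1 < p) (hq : 1 < q) (s t : ℝ) :
    corrEnergy (box p q) (arrRotate p q s t X - arrRotate p q s t (ternaryLegendreArray p q)) ≤
      4 * ((p : ℝ) ^ 3 + (q : ℝ) ^ 3) := by
  have hsub := hX.sub_ternaryLegendreArray hp hq
  rw [← arrRotate_sub]
  refine (corrEnergy_arrRotate_le (by omega) (by omega) (fun x => ?_) (fun x hx => ?_) s t).trans ?_
  · rw [hsub]
    split_ifs
    · exact hX.1.abs_le_one x
    · simp
  · by_contra h
    exact hx (by rw [hsub, if_neg h])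
  · refine (add_pow_le p.cast_nonneg q.cast_nonneg 3).trans_eq ?_
    norm_num

theorem tendsto_corrEnergy_arrRotate_sub {ι : Type*} {l : Filter ι} {p q : ι → ℕ}
    {X : ι → ℤ × ℤ → ℝ} (hX : ∀ k, IsLegendreArray (p k) (q k) (X k)) (hp : ∀ k, 1 < p k)
    (hq : ∀ k, 1 < q k) (hqp : Tendsto (fun k => (q k : ℝ) / (p k : ℝ) ^ 2) l (𝓝 0))
    (hpq : Tendsto (fun k => (p k : ℝ) / (q k : ℝ) ^ 2) l (𝓝 0)) (s t : ℝ) :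
    Tendsto (fun k => corrEnergy (box (p k) (q k)) (arrRotate (p k) (q k) s t (X k) -
      arrRotate (p k) (q k) s t (ternaryLegendreArray (p k) (q k))) / ((p k : ℝ) * q k) ^ 2) l
      (𝓝 0) := by
  have hbound : Tendsto (fun k => 4 * ((p k : ℝ) / (q k : ℝ) ^ 2 + (q k : ℝ) / (p k : ℝ) ^ 2)) l
      (𝓝 0) := by
    simpa using (hpq.add hqp).const_mul 4
  refine squeeze_zero (fun k => div_nonneg (corrEnergy_nonneg _ _) (sq_nonneg _)) (fun k => ?_)
    hbound
  have hp0 : (0 : ℝ) < p k := by exact_mod_cast (hp k).pos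
  have hq0 : (0 : ℝ) < q k := by exact_mod_cast (hq k).pos
  rw [div_le_iff₀ (by positivity)]
  refine ((hX k).corrEnergy_arrRotate_sub_le (hp k) (hq k) s t).trans_eq ?_
  field_simp

theorem tendsto_corrEnergy_ternaryLegendreArray {ι : Type*} {l : Filter ι} {s t : ℝ}
    (hs1 : -(1 / 2) < s) (hs2 : s ≤ 1 / 2) (ht1 : -(1 / 2) < t) (ht2 : t ≤ 1 / 2) {p q : ι → ℕ}
    (hp : ∀ k, (p k).Prime ∧ Odd (p k)) (hq : ∀ k, (q k).Prime ∧ Odd (q k))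
    (hplim : Tendsto p l atTop) (hqlim : Tendsto q l atTop) :
    Tendsto (fun k => corrEnergy (box (p k) (q k)) (arrRotate (p k) (q k) s t
        (ternaryLegendreArray (p k) (q k))) / ((p k : ℝ) * q k) ^ 2) l
      (𝓝 ((7 / 6 + 8 * (|s| - 1 / 4) ^ 2) * (7 / 6 + 8 * (|t| - 1 / 4) ^ 2))) := by
  refine ((tendsto_corrEnergy_ternaryLegendreSeq hs1 hs2 hp hplim).mul
    (tendsto_corrEnergy_ternaryLegendreSeq ht1 ht2 hq hqlim)).congr fun k => ?_
  rw [div_mul_div_comm, ← mul_pow, ← corrEnergy_mul, ← arrRotate_mul]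
  rfl

theorem tendsto_atTop_of_div_sq_tendsto_zero {ι : Type*} {l : Filter ι} {p q : ι → ℕ}
    (hq : ∀ k, 0 < q k) (hp : ∀ k, 0 < p k)
    (h : Tendsto (fun k => (q k : ℝ) / (p k : ℝ) ^ 2) l (𝓝 0)) : Tendsto p l atTop := by
  have hinv : Tendsto (fun k => ((p k : ℝ) ^ 2)⁻¹) l (𝓝[>] 0) := by
    refine tendsto_nhdsWithin_iff.mpr ⟨squeeze_zero (fun k => by positivity) (fun k => ?_) h,
      .of_forall fun k => ?_⟩
    · rw [inv_eq_one_div]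
      gcongr
      exact_mod_cast hq k
    · have := hp k
      simp only [Set.mem_Ioi]
      positivity
  have hsq := Real.tendsto_sqrt_atTop.comp (tendsto_inv_nhdsGT_zero.comp hinv)
  refine tendsto_natCast_atTop_iff.mp (hsq.congr fun k => ?_)
  rw [Function.comp_apply, Function.comp_apply, inv_inv, Real.sqrt_sq (p k).cast_nonneg]

theorem tendsto_corrEnergy_arrRotate {ι : Type*} {l : Filter ι} {s t : ℝ}
    (hs1 : -(1 / 2) < s) (hs2 : s ≤ 1 / 2) (ht1 : -(1 / 2) < t) (ht2 : t ≤ 1 / 2) {p q : ι → ℕ}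
    (hp : ∀ k, (p k).Prime ∧ Odd (p k)) (hq : ∀ k, (q k).Prime ∧ Odd (q k))
    (hqp : Tendsto (fun k => (q k : ℝ) / (p k : ℝ) ^ 2) l (𝓝 0))
    (hpq : Tendsto (fun k => (p k : ℝ) / (q k : ℝ) ^ 2) l (𝓝 0)) {X : ι → ℤ × ℤ → ℝ}
    (hX : ∀ k, IsLegendreArray (p k) (q k) (X k)) :
    Tendsto (fun k => corrEnergy (box (p k) (q k)) (arrRotate (p k) (q k) s t (X k)) /
        ((p k : ℝ) * q k) ^ 2) l
      (𝓝 ((7 / 6 + 8 * (|s| - 1 / 4) ^ 2) * (7 / 6 + 8 * (|t| - 1 / 4) ^ 2))) := by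
  have hp0 : ∀ k, 0 < p k := fun k => (hp k).1.pos
  have hq0 : ∀ k, 0 < q k := fun k => (hq k).1.pos
  refine tendsto_corrEnergy_div_of_tendsto_sub
    (fun k => (isArray_arrRotate (p k) (q k) s t (ternaryLegendreArray (p k) (q k))).eq_zero)
    (fun k => (isArray_arrRotate (p k) (q k) s t (X k)).eq_zero) (fun k => sq_nonneg _)
    (tendsto_corrEnergy_ternaryLegendreArray hs1 hs2 ht1 ht2 hp hq ?_ ?_)
    (tendsto_corrEnergy_arrRotate_sub hX (fun k => (hp k).1.one_lt) (fun k => (hq k).1.one_lt)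
      hqp hpq s t)
  · exact tendsto_atTop_of_div_sq_tendsto_zero hq0 hp0 hqp
  · exact tendsto_atTop_of_div_sq_tendsto_zero hp0 hq0 hpq

end Arrays

/-- The asymptotic merit factor of rotated Legendre arrays of size `p_k × q_k`
with `q_k/p_k² → 0` and `p_k/q_k² → 0`. -/
theorem stmt9 (s t : ℝ) (hs1 : -(1/2) < s) (hs2 : s ≤ 1/2)
    (ht1 : -(1/2) < t) (ht2 : t ≤ 1/2)
    (p q : ℕ → ℕ) (hp : ∀ k, (p k).Prime ∧ Odd (p k)) (hq : ∀ k, (q k).Prime ∧ Odd (q k))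
    (hqp : Filter.Tendsto (fun k => (q k : ℝ) / (p k : ℝ) ^ 2) Filter.atTop (nhds 0))
    (hpq : Filter.Tendsto (fun k => (p k : ℝ) / (q k : ℝ) ^ 2) Filter.atTop (nhds 0))
    (X : ℕ → ℤ × ℤ → ℝ) (hX : ∀ k, IsLegendreArray (p k) (q k) (X k)) :
    Filter.Tendsto
      (fun k : ℕ => 1 / meritFactor (p k) (q k) (arrRotate (p k) (q k) s t (X k)))
      Filter.atTop
      (nhds ((7/6 + 8 * (|s| - 1/4) ^ 2) * (7/6 + 8 * (|t| - 1/4) ^ 2) - 1)) := by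
  have hp0 : ∀ k, (0 : ℤ) < p k := fun k => by exact_mod_cast (hp k).1.pos
  have hq0 : ∀ k, (0 : ℤ) < q k := fun k => by exact_mod_cast (hq k).1.pos
  refine ((tendsto_corrEnergy_arrRotate hs1 hs2 ht1 ht2 hp hq hqp hpq hX).sub_const 1).congr
    fun k => ?_
  rw [((hX k).1.arrRotate (hp0 k) (hq0 k) s t).one_div_meritFactor (hp0 k) (hq0 k),
    Int.cast_natCast, Int.cast_natCast]
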